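/- arXiv:1504.04396 — 4 statements merged into one kernel-verified Lean document; each statement's English description precedes it below -/
import Mathlib

section
/- For each k ∈ {0,1}, there exists a holomorphic function G_k on the slit plane C ∖ (−∞,0] such that G_k(τ) = Σ_{m≥0} c_{k,m} τ^{m+k/2+λ} (principal-branch complex powers) for every τ ∈ C ∖ (−∞,0] with |τ| < 4. (That is, the regularized I-function of [C³/Z₂] can be analytically continued to the region |arg τ| < π.) -/
/-!
By the duplication formula for `(2m + k)!`, the `I`-function is `τ ^ (λ + k / 2)` times a multiple
of the regularized `₄F₃` series at `z = -τ / 4`, so it suffices to continue that series to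
`ℂ ∖ [1, ∞)`. It arises from the geometric series by multiplying the coefficients repeatedly by
`(a)ₘ / Γ(b + m)`. When `0 < re a < re b` this replaces `F z`, up to a constant, by the Beta
integral `∫ t in 0..1, t ^ (a - 1) * (1 - t) ^ (b - a - 1) * F (t * z)`, which is again holomorphic
because `ℂ ∖ [1, ∞)` is star-shaped about `0`. The Euler operator `b + z * d/dz` removes the
condition `re a < re b`, and a shift of the coefficients removes `0 < re a`.
-/

open Complex Metric MeasureTheory Topology
open scoped Nat Real

section ParametricIntegral

variable {𝕜 : Type*} [RCLike 𝕜] {μ : Measure ℝ} {a b : ℝ}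

theorem hasDerivAt_intervalIntegral_mul_of_continuousOn {U : Set 𝕜} (hU : IsOpen U) {w : ℝ → 𝕜}
    (hw : IntervalIntegrable w μ a b) {f f' : 𝕜 → ℝ → 𝕜}
    (hf : ∀ z ∈ U, ContinuousOn (f z) (Set.uIcc a b))
    (hf' : ContinuousOn (Function.uncurry f') (U ×ˢ Set.uIcc a b))
    (hderiv : ∀ z ∈ U, ∀ t ∈ Set.uIcc a b, HasDerivAt (f · t) (f' z t) z) {z : 𝕜} (hz : z ∈ U) :
    HasDerivAt (fun z ↦ ∫ t in a..b, w t * f z t ∂μ) (∫ t in a..b, w t * f' z t ∂μ) z := by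
  obtain ⟨ε, hε, hball⟩ := nhds_basis_closedBall.mem_iff.1 (hU.mem_nhds hz)
  obtain ⟨M, hM⟩ := ((isCompact_closedBall z ε).prod isCompact_uIcc).exists_bound_of_continuousOn
    (hf'.mono (Set.prod_mono_left hball))
  have hf'z : ContinuousOn (f' z) (Set.uIcc a b) :=
    hf'.comp (f := fun t ↦ (z, t)) (by fun_prop) fun t ht ↦ ⟨hz, ht⟩
  refine (intervalIntegral.hasDerivAt_integral_of_dominated_loc_of_deriv_le
    (F := fun z t ↦ w t * f z t) (F' := fun z t ↦ w t * f' z t) (bound := fun t ↦ ‖w t‖ * M)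
    (ball_mem_nhds z hε) ?_ (hw.mul_continuousOn (hf z hz))
    (hw.mul_continuousOn hf'z).def'.aestronglyMeasurable ?_ (hw.norm.mul_const M) ?_).2
  · filter_upwards [hU.mem_nhds hz] with x hx
    exact (hw.mul_continuousOn (hf x hx)).def'.aestronglyMeasurable
  · refine .of_forall fun t ht x hx ↦ ?_
    rw [norm_mul]
    gcongr
    exact hM (x, t) ⟨ball_subset_closedBall hx, Set.uIoc_subset_uIcc ht⟩
  · exact .of_forall fun t ht x hx ↦
      (hderiv x (hball (ball_subset_closedBall hx)) t (Set.uIoc_subset_uIcc ht)).const_mul (w t)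

end ParametricIntegral

section PowerSeries

variable {q : ℕ → ℂ} {F : ℂ → ℂ} {R : ℝ}

theorem hasSum_deriv_of_hasSum_mul_pow (hF : ∀ z ∈ ball 0 R, HasSum (fun m ↦ q m * z ^ m) (F z))
    {z : ℂ} (hz : z ∈ ball 0 R) :
    HasSum (fun m ↦ q m * (m * z ^ (m - 1))) (deriv F z) := by
  obtain ⟨r, hzr, hrR⟩ := exists_between (mem_ball_zero_iff.1 hz)
  have hr : 0 ≤ r := (norm_nonneg z).trans hzr.le
  have hsum : Summable fun m ↦ ‖q m * (r : ℂ) ^ m‖ :=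
    (hF r (by simpa [abs_of_nonneg hr] using hrR)).summable.norm
  have hle (m : ℕ) (w : ℂ) (hw : w ∈ ball 0 r) : ‖q m * w ^ m‖ ≤ ‖q m * (r : ℂ) ^ m‖ := by
    simp only [norm_mul, norm_pow, norm_real, Real.norm_of_nonneg hr]
    gcongr
    exact (mem_ball_zero_iff.1 hw).le
  have heq : (fun w ↦ ∑' m, q m * w ^ m) =ᶠ[𝓝 z] F := by
    filter_upwards [isOpen_ball.mem_nhds hz] with w hw using (hF w hw).tsum_eq
  have hderiv := hasSum_deriv_of_summable_norm hsum (fun m ↦ by fun_prop) isOpen_ball hle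
    (mem_ball_zero_iff.2 hzr)
  simpa [heq.deriv_eq] using hderiv

theorem hasSum_dslope_of_hasSum_mul_pow
    (hF : ∀ z ∈ ball 0 R, HasSum (fun m ↦ q m * z ^ m) (F z)) {z : ℂ} (hz : z ∈ ball 0 R) :
    HasSum (fun m ↦ q (m + 1) * z ^ m) (dslope F 0 z) := by
  have h0 : (0 : ℂ) ∈ ball 0 R := by
    simpa using (norm_nonneg z).trans_lt (mem_ball_zero_iff.1 hz)
  rcases eq_or_ne z 0 with rfl | hz0
  · have hderiv : deriv F 0 = q 1 := (hasSum_deriv_of_hasSum_mul_pow hF h0).unique <| by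
      simpa using hasSum_single 1 (f := fun m ↦ q m * (m * (0 : ℂ) ^ (m - 1))) fun m hm ↦ by
        rcases m with _ | _ | m <;> simp_all
    rw [dslope_same, hderiv]
    simpa [mul_comm] using HasSum.hasSum_at_zero (𝕜 := ℂ) fun m ↦ q (m + 1)
  · have hF0 : F 0 = q 0 :=
      (hF 0 h0).unique (by simpa [mul_comm] using HasSum.hasSum_at_zero (𝕜 := ℂ) q)
    rw [dslope_of_ne _ hz0, slope_def_field, hF0]
    convert! ((hasSum_nat_add_iff' 1).2 (hF z hz)).div_const z using 2 with m
    · field_simp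
      ring
    · simp
    · simp

end PowerSeries

section Moments

variable {w : ℝ → ℂ} {F : ℂ → ℂ}

theorem differentiableOn_integral_mul_comp_ofReal_mul {U : Set ℂ} (hU : IsOpen U)
    (hstar : StarConvex ℝ 0 U) (hw : IntervalIntegrable w volume 0 1)
    (hF : DifferentiableOn ℂ F U) :
    DifferentiableOn ℂ (fun z ↦ ∫ t in (0 : ℝ)..1, w t * F (t * z)) U := by
  have hmem : ∀ z ∈ U, ∀ t ∈ Set.uIcc (0 : ℝ) 1, (t : ℂ) * z ∈ U := fun z hz t ht ↦ by
    rw [Set.uIcc_of_le zero_le_one] at ht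
    exact hstar.smul_mem hz ht.1 ht.2
  refine fun z hz ↦ (hasDerivAt_intervalIntegral_mul_of_continuousOn hU hw
    (f' := fun z t ↦ deriv F (t * z) * t) ?_ ?_ ?_ hz).differentiableAt.differentiableWithinAt
  · exact fun z hz ↦ hF.continuousOn.comp (by fun_prop) (hmem z hz)
  · exact ((hF.deriv hU).continuousOn.comp (f := fun p : ℂ × ℝ ↦ (p.2 : ℂ) * p.1) (by fun_prop)
      fun p hp ↦ hmem p.1 hp.1 p.2 hp.2).mul (by fun_prop)
  · exact fun z hz t ht ↦ (hF.differentiableAt (hU.mem_nhds (hmem z hz t ht))).hasDerivAt.comp z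
      (hasDerivAt_const_mul (t : ℂ))

theorem hasSum_integral_mul_comp_ofReal_mul {q : ℕ → ℂ} {R : ℝ}
    (hw : IntervalIntegrable w volume 0 1)
    (hF : ∀ z ∈ ball 0 R, HasSum (fun m ↦ q m * z ^ m) (F z)) {z : ℂ} (hz : z ∈ ball 0 R) :
    HasSum (fun m ↦ (∫ t in (0 : ℝ)..1, w t * (t : ℂ) ^ m) * q m * z ^ m)
      (∫ t in (0 : ℝ)..1, w t * F (t * z)) := by
  have hsum : Summable fun m ↦ ‖q m * z ^ m‖ := (hF z hz).summable.norm
  have hpow (m : ℕ) : IntervalIntegrable (fun t ↦ w t * (t : ℂ) ^ m) volume 0 1 :=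
    hw.mul_continuousOn (by fun_prop)
  have hterm (t : ℝ) (ht : t ∈ Set.uIoc 0 1) :
      HasSum (fun m ↦ w t * (t : ℂ) ^ m * (q m * z ^ m)) (w t * F (t * z)) := by
    rw [Set.uIoc_of_le zero_le_one] at ht
    have htz : (t : ℂ) * z ∈ ball 0 R := by
      rw [mem_ball_zero_iff, norm_mul, norm_real, Real.norm_of_nonneg ht.1.le]
      exact (mul_le_of_le_one_left (norm_nonneg z) ht.2).trans_lt (mem_ball_zero_iff.1 hz)
    convert! (hF _ htz).mul_left (w t) using 2 with m
    ring
  have hle (m : ℕ) (t : ℝ) (ht : t ∈ Set.uIoc 0 1) :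
      ‖w t * (t : ℂ) ^ m * (q m * z ^ m)‖ ≤ ‖w t‖ * ‖q m * z ^ m‖ := by
    rw [Set.uIoc_of_le zero_le_one] at ht
    rw [norm_mul, norm_mul, norm_pow, norm_real, Real.norm_of_nonneg ht.1.le]
    gcongr
    exact mul_le_of_le_one_right (norm_nonneg _) (pow_le_one₀ ht.1.le ht.2)
  simp only [mul_assoc _ (q _), ← intervalIntegral.integral_mul_const]
  exact intervalIntegral.hasSum_integral_of_dominated_convergence (fun m t ↦ ‖w t‖ * ‖q m * z ^ m‖)
      (fun m ↦ ((hpow m).mul_const _).def'.aestronglyMeasurable)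
      (fun m ↦ .of_forall (hle m))
      (.of_forall fun t _ ↦ hsum.mul_left _)
      (by simpa only [tsum_mul_left] using hw.norm.mul_const _)
      (.of_forall hterm)

theorem integral_cpow_mul_one_sub_cpow_mul_pow (u v : ℂ) (m : ℕ) :
    ∫ t in (0 : ℝ)..1, (t : ℂ) ^ (u - 1) * (1 - t : ℂ) ^ (v - 1) * (t : ℂ) ^ m =
      betaIntegral (u + m) v := by
  refine intervalIntegral.integral_congr_ae (.of_forall fun t ht ↦ ?_)
  rw [Set.uIoc_of_le zero_le_one] at ht
  have ht0 : (t : ℂ) ≠ 0 := ofReal_ne_zero.2 ht.1.ne'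
  rw [add_sub_right_comm, cpow_add _ _ ht0, cpow_natCast]
  ring

end Moments

/-- The power series `∑ q m * z ^ m` converges on the open unit disc and its sum continues
analytically to `U`. The continuation `F` is also required to be the sum at the points of the disc
outside `U`; in the applications `U` contains the disc. -/
def PowerSeriesContinues (U : Set ℂ) (q : ℕ → ℂ) : Prop :=
  ∃ F : ℂ → ℂ, DifferentiableOn ℂ F U ∧ ∀ z ∈ ball 0 1, HasSum (fun m ↦ q m * z ^ m) (F z)

namespace PowerSeriesContinues

variable {U : Set ℂ} {q : ℕ → ℂ} {a b : ℂ}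

theorem const_mul (h : PowerSeriesContinues U q) (C : ℂ) :
    PowerSeriesContinues U fun m ↦ C * q m := by
  obtain ⟨F, hF, hsum⟩ := h
  refine ⟨fun z ↦ C * F z, hF.const_mul C, fun z hz ↦ ?_⟩
  simpa only [mul_assoc] using (hsum z hz).mul_left C

-- Multiplying `q m` by `m` amounts to applying the Euler operator `z * d/dz` to the sum.
theorem add_natCast_mul (h : PowerSeriesContinues U q) (hU : IsOpen U) (β : ℂ) :
    PowerSeriesContinues U fun m ↦ (β + m) * q m := by
  obtain ⟨F, hF, hsum⟩ := h
  refine ⟨fun z ↦ β * F z + z * deriv F z,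
    (hF.const_mul β).add (differentiableOn_id.mul (hF.deriv hU)), fun z hz ↦ ?_⟩
  convert! ((hsum z hz).mul_left β).add
    ((hasSum_deriv_of_hasSum_mul_pow hsum hz).mul_left z) using 2 with m
  rcases m with _ | m
  · simp
  · simp only [Nat.add_sub_cancel, pow_succ]
    ring

theorem comp_succ_iff (hU : U ∈ 𝓝 0) :
    (PowerSeriesContinues U fun m ↦ q (m + 1)) ↔ PowerSeriesContinues U q := by
  constructor
  · rintro ⟨F, hF, hsum⟩
    refine ⟨fun z ↦ q 0 + z * F z, (differentiableOn_id.mul hF).const_add _, fun z hz ↦ ?_⟩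
    refine (hasSum_nat_add_iff' 1).1 ?_
    simpa [pow_succ', mul_left_comm] using (hsum z hz).mul_left z
  · rintro ⟨F, hF, hsum⟩
    exact ⟨dslope F 0, (differentiableOn_dslope hU).2 hF,
      fun z hz ↦ hasSum_dslope_of_hasSum_mul_pow hsum hz⟩

theorem comp_add_iff (hU : U ∈ 𝓝 0) (N : ℕ) :
    (PowerSeriesContinues U fun m ↦ q (m + N)) ↔ PowerSeriesContinues U q := by
  induction N with
  | zero => rfl
  | succ N ih =>
    rw [← ih, ← comp_succ_iff (q := fun m ↦ q (m + N)) hU]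
    simp only [add_assoc, add_comm 1 N]

theorem integral_mul_pow_mul (h : PowerSeriesContinues U q) (hU : IsOpen U)
    (hstar : StarConvex ℝ 0 U) {w : ℝ → ℂ} (hw : IntervalIntegrable w volume 0 1) :
    PowerSeriesContinues U fun m ↦ (∫ t in (0 : ℝ)..1, w t * (t : ℂ) ^ m) * q m := by
  obtain ⟨F, hF, hsum⟩ := h
  exact ⟨fun z ↦ ∫ t in (0 : ℝ)..1, w t * F (t * z),
    differentiableOn_integral_mul_comp_ofReal_mul hU hstar hw hF,
    fun z hz ↦ hasSum_integral_mul_comp_ofReal_mul hw hsum hz⟩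

theorem Gamma_div_Gamma_mul_of_re_lt_re (h : PowerSeriesContinues U q) (hU : IsOpen U)
    (hstar : StarConvex ℝ 0 U) (ha : 0 < a.re) (hab : a.re < b.re) :
    PowerSeriesContinues U fun m ↦ Gamma (a + m) / Gamma (b + m) * q m := by
  have hba : 0 < (b - a).re := by simpa using hab
  have hconv := betaIntegral_convergent ha hba
  convert! (h.integral_mul_pow_mul hU hstar hconv).const_mul (Gamma (b - a))⁻¹ using 2 with m
  have ham : 0 < (a + m).re := by simpa using add_pos_of_pos_of_nonneg ha m.cast_nonneg
  have hbm : 0 < (b + m).re := by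
    simpa using add_pos_of_pos_of_nonneg (ha.trans hab) m.cast_nonneg
  have hbeta := Gamma_mul_Gamma_eq_betaIntegral ham hba
  rw [show a + m + (b - a) = b + m by ring] at hbeta
  rw [integral_cpow_mul_one_sub_cpow_mul_pow]
  have := Gamma_ne_zero_of_re_pos hba
  have := Gamma_ne_zero_of_re_pos hbm
  field_simp
  linear_combination q m * hbeta

theorem Gamma_div_Gamma_mul (h : PowerSeriesContinues U q) (hU : IsOpen U)
    (hstar : StarConvex ℝ 0 U) (ha : 0 < a.re) :
    PowerSeriesContinues U fun m ↦ Gamma (a + m) / Gamma (b + m) * q m := by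
  obtain ⟨N, hN⟩ := exists_nat_gt (a.re - b.re)
  induction N generalizing b with
  | zero => exact h.Gamma_div_Gamma_mul_of_re_lt_re hU hstar ha (by simpa using hN)
  | succ N ih =>
    have hb : a.re - (b + 1).re < N := by
      rw [add_re, one_re]
      push_cast at hN
      linarith
    convert! (ih hb).add_natCast_mul hU b using 2 with m
    rw [div_eq_mul_inv, one_div_Gamma_eq_self_mul_one_div_Gamma_add_one, add_right_comm b 1]
    ring

theorem ascPochhammer_div_Gamma_mul (h : PowerSeriesContinues U q) (hU : IsOpen U)
    (hstar : StarConvex ℝ 0 U) (h0 : 0 ∈ U) (a b : ℂ) :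
    PowerSeriesContinues U fun m ↦ (ascPochhammer ℂ m).eval a / Gamma (b + m) * q m := by
  obtain ⟨N, hN⟩ := exists_nat_gt (-a.re)
  have haN : 0 < (a + N).re := by
    rw [add_re, natCast_re]
    linarith
  have hpole (j : ℕ) : a + N ≠ -j := by
    intro hj
    simp [hj] at haN
    linarith [j.cast_nonneg (α := ℝ)]
  have hU0 : U ∈ 𝓝 0 := hU.mem_nhds h0
  rw [← comp_add_iff hU0 N] at h ⊢
  convert! (h.Gamma_div_Gamma_mul (b := b + N) hU hstar haN).const_mul
    ((ascPochhammer ℂ N).eval a / Gamma (a + N)) using 2 with m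
  have hsplit : (ascPochhammer ℂ (m + N)).eval a =
      (ascPochhammer ℂ N).eval a * (Gamma (a + N + m) / Gamma (a + N)) := by
    rw [Gamma_add_nat_div_Gamma_eq _ hpole, add_comm m, ← ascPochhammer_mul]
    simp
  rw [hsplit]
  push_cast
  ring_nf

end PowerSeriesContinues

section Hypergeometric

/-- The plane cut along `[1, ∞)`, the domain of the principal branch of the generalized
hypergeometric functions `ₙ₊₁Fₙ`. -/
def hypergeometricDomain : Set ℂ := {z | 1 - z ∈ slitPlane}

theorem isOpen_hypergeometricDomain : IsOpen hypergeometricDomain :=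
  isOpen_slitPlane.preimage (by fun_prop : Continuous fun z : ℂ ↦ 1 - z)

theorem starConvex_hypergeometricDomain : StarConvex ℝ 0 hypergeometricDomain := by
  have hstar : StarConvex ℝ (1 - 0 : ℂ) slitPlane := by simpa using starConvex_one_slitPlane
  exact hstar.affine_preimage (AffineMap.const ℝ ℂ 1 - AffineMap.id ℝ ℂ)

theorem zero_mem_hypergeometricDomain : 0 ∈ hypergeometricDomain := by
  simp [hypergeometricDomain]

theorem neg_div_mem_hypergeometricDomain {z : ℂ} (hz : z ∈ slitPlane) {r : ℝ} (hr : 0 < r) :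
    -z / r ∈ hypergeometricDomain := by
  rw [hypergeometricDomain, Set.mem_ofPred_eq, neg_div, sub_neg_eq_add, mem_slitPlane_iff, add_re,
    add_im, one_re, one_im, zero_add, div_ofReal_re, div_ofReal_im]
  rcases mem_slitPlane_iff.1 hz with hre | him
  · exact .inl (by positivity)
  · exact .inr (div_ne_zero him hr.ne')

theorem powerSeriesContinues_one : PowerSeriesContinues hypergeometricDomain fun _ ↦ 1 := by
  refine ⟨fun z ↦ (1 - z)⁻¹, fun z hz ↦ ?_, fun z hz ↦ ?_⟩
  · exact (DifferentiableAt.inv (by fun_prop) (slitPlane_ne_zero hz)).differentiableWithinAt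
  · simpa using hasSum_geometric_of_norm_lt_one (mem_ball_zero_iff.1 hz)

theorem regularizedHGFunCoeff_cons_cons (x y : ℂ) (a b : Multiset ℂ) (n : ℕ) :
    regularizedHGFunCoeff (x ::ₘ a) (y ::ₘ b) n =
      (ascPochhammer ℂ n).eval x / Gamma (y + n) * regularizedHGFunCoeff a b n := by
  simp only [regularizedHGFunCoeff, Multiset.map_cons, Multiset.prod_cons]
  ring

theorem powerSeriesContinues_regularizedHGFunCoeff {a b : Multiset ℂ} (hab : a.card = b.card + 1) :
    PowerSeriesContinues hypergeometricDomain (regularizedHGFunCoeff a b) := by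
  have step {q : ℕ → ℂ} (h : PowerSeriesContinues hypergeometricDomain q) (x y : ℂ) :=
    h.ascPochhammer_div_Gamma_mul isOpen_hypergeometricDomain starConvex_hypergeometricDomain
      zero_mem_hypergeometricDomain x y
  induction b using Multiset.induction generalizing a with
  | empty =>
    obtain ⟨x, rfl⟩ := Multiset.card_eq_one.1 hab
    convert! step powerSeriesContinues_one x 1 using 2 with m
    simp [regularizedHGFunCoeff, add_comm (1 : ℂ), Gamma_nat_eq_factorial]
  | cons y b ih =>
    obtain ⟨x, hx⟩ := Multiset.card_pos_iff_exists_mem.1 (by omega : 0 < a.card)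
    obtain ⟨a, rfl⟩ := Multiset.exists_cons_of_mem hx
    convert! step (ih (by simpa using hab)) x y using 2 with m
    exact regularizedHGFunCoeff_cons_cons x y a b m

end Hypergeometric

/-- The coefficient `c_{k,m}` of `τ ^ (m + k / 2 + λ)` in the regularized `I`-function of
`[ℂ³/ℤ₂]`, for a complex parameter `λ` and any `k`. At a pole of `Gamma` the value is `0`, in
accordance with the convention `1 / Γ = 0` there. -/
noncomputable def regularizedICoeff (lam : ℂ) (k m : ℕ) : ℂ :=
  (∏ l ∈ Finset.range m, (-lam - ((k : ℂ) / 2 + l)) ^ 3) /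
    (Gamma (1 + m + (k : ℂ) / 2 + lam) * (2 * m + k)!)

theorem prod_range_neg_sub_natCast (a : ℂ) (m : ℕ) :
    ∏ l ∈ Finset.range m, (-a - l) = (-1) ^ m * (ascPochhammer ℂ m).eval a := by
  rw [← neg_neg a, ascPochhammer_eval_neg_eq_descPochhammer, descPochhammer_eval_eq_prod_range,
    ← mul_assoc, ← mul_pow]
  simp

theorem factorial_mul_sqrt_pi (n : ℕ) :
    (n ! * √π : ℂ) = 2 ^ n * (Gamma ((n + 1) / 2) * Gamma (n / 2 + 1)) := by
  have h := Gamma_mul_Gamma_add_half ((n + 1) / 2)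
  rw [show ((n : ℂ) + 1) / 2 + 1 / 2 = n / 2 + 1 by ring, mul_div_cancel₀ _ two_ne_zero,
    Gamma_nat_eq_factorial, show 1 - ((n : ℂ) + 1) = -n by ring, cpow_neg, cpow_natCast] at h
  rw [h]
  field_simp

theorem regularizedICoeff_eq_regularizedHGFunCoeff (lam : ℂ) (k m : ℕ) :
    regularizedICoeff lam k m = √π / 2 ^ k * (-1 / 4) ^ m *
      regularizedHGFunCoeff {lam + k / 2, lam + k / 2, lam + k / 2, 1}
        {lam + k / 2 + 1, ((k : ℂ) + 1) / 2, (k : ℂ) / 2 + 1} m := by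
  have hpi : (√π : ℂ) ≠ 0 := by simp [Real.pi_pos.le, Real.pi_ne_zero]
  have hfact : ((2 * m + k)! : ℂ) = 4 ^ m * 2 ^ k *
      (Gamma ((k + 1) / 2 + m) * Gamma (k / 2 + 1 + m)) / √π := by
    rw [eq_div_iff hpi, factorial_mul_sqrt_pi, pow_add, pow_mul]
    push_cast
    ring_nf
  have hprod : ∏ l ∈ Finset.range m, (-lam - ((k : ℂ) / 2 + l)) =
      (-1) ^ m * (ascPochhammer ℂ m).eval (lam + k / 2) := by
    rw [← prod_range_neg_sub_natCast]
    exact Finset.prod_congr rfl fun l _ ↦ by ring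
  have hcoeff : regularizedHGFunCoeff {lam + k / 2, lam + k / 2, lam + k / 2, 1}
      {lam + k / 2 + 1, ((k : ℂ) + 1) / 2, (k : ℂ) / 2 + 1} m =
      (ascPochhammer ℂ m).eval (lam + k / 2) ^ 3 / (Gamma (1 + m + k / 2 + lam) *
        (Gamma ((k + 1) / 2 + m) * Gamma (k / 2 + 1 + m))) := by
    have hm : (m ! : ℂ) ≠ 0 := Nat.cast_ne_zero.2 m.factorial_ne_zero
    simp only [regularizedHGFunCoeff, Multiset.insert_eq_cons, Multiset.map_cons,
      Multiset.map_singleton, Multiset.prod_cons, Multiset.prod_singleton, ascPochhammer_eval_one]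
    rw [add_comm 1 (m : ℂ), add_right_comm (m : ℂ) 1, add_right_comm ((m : ℂ) + k / 2)]
    field_simp
    ring_nf
  rw [regularizedICoeff, Finset.prod_pow, hprod, hfact, hcoeff, div_pow, mul_pow, ← pow_mul,
    mul_comm m 3, pow_mul, show (-1 : ℂ) ^ 3 = -1 by norm_num]
  field_simp

theorem stmt_3_general (lam : ℂ) (k : ℕ) :
    ∃ G : ℂ → ℂ, DifferentiableOn ℂ G slitPlane ∧ ∀ τ ∈ slitPlane, ‖τ‖ < 4 →
      HasSum (fun m : ℕ ↦ regularizedICoeff lam k m * τ ^ ((m : ℂ) + (k : ℂ) / 2 + lam)) (G τ) := by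
  obtain ⟨F, hF, hsum⟩ := (powerSeriesContinues_regularizedHGFunCoeff
    (a := {lam + k / 2, lam + k / 2, lam + k / 2, 1})
    (b := {lam + k / 2 + 1, ((k : ℂ) + 1) / 2, (k : ℂ) / 2 + 1}) rfl).const_mul (√π / 2 ^ k)
  have hmaps (τ : ℂ) (hτ : τ ∈ slitPlane) : -τ / 4 ∈ hypergeometricDomain := by
    simpa using neg_div_mem_hypergeometricDomain hτ (zero_lt_four (α := ℝ))
  refine ⟨fun τ ↦ τ ^ (lam + k / 2) * F (-τ / 4), fun τ hτ ↦ ?_, fun τ hτ hτ4 ↦ ?_⟩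
  · exact (differentiableAt_id.cpow_const hτ).differentiableWithinAt.mul
      ((hF _ (hmaps τ hτ)).comp τ (by fun_prop) hmaps)
  · have hball : -τ / 4 ∈ ball (0 : ℂ) 1 := by
      rw [mem_ball_zero_iff, norm_div, norm_neg, norm_ofNat, div_lt_one four_pos]
      exact hτ4
    convert! (hsum _ hball).mul_left (τ ^ (lam + k / 2)) using 2 with m
    rw [regularizedICoeff_eq_regularizedHGFunCoeff, add_assoc (m : ℂ), add_comm (m : ℂ),
      cpow_add _ _ (slitPlane_ne_zero hτ), cpow_natCast, add_comm lam, neg_div, neg_div]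
    ring

/-- Fix a positive irrational real `λ` and `k ∈ {0,1}`, and set
`c_{k,m} = [∏_{l=0}^{m−1} (−λ−(k/2+l))³] / [Γ(1+m+k/2+λ)·(2m+k)!]`.  There exists a
holomorphic function `G_k` on the slit plane `ℂ ∖ (−∞,0]` such that
`G_k(τ) = Σ_{m≥0} c_{k,m} τ^{m+k/2+λ}` (principal-branch complex powers) for every `τ` in the
slit plane with `|τ| < 4`; i.e. the regularized `I`-function of `[ℂ³/ℤ₂]` extends
analytically to the region `|arg τ| < π`. -/
theorem stmt_3 (lam : ℝ) (hpos : 0 < lam) (hirr : Irrational lam)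
    (k : ℕ) (hk : k ≤ 1)
    (c : ℕ → ℝ)
    (hc : ∀ m : ℕ, c m =
      (∏ l ∈ Finset.range m, (-lam - ((k : ℝ) / 2 + (l : ℝ))) ^ 3) /
        (Real.Gamma (1 + (m : ℝ) + (k : ℝ) / 2 + lam) * ((2 * m + k).factorial : ℝ))) :
    ∃ G : ℂ → ℂ, DifferentiableOn ℂ G Complex.slitPlane ∧
      ∀ τ ∈ Complex.slitPlane, ‖τ‖ < 4 →
        G τ = ∑' m : ℕ, (c m : ℂ) * τ ^ ((m : ℂ) + (k : ℂ) / 2 + (lam : ℂ)) := by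
  obtain ⟨G, hG, hsum⟩ := stmt_3_general lam k
  refine ⟨G, hG, fun τ hτ hτ4 ↦ ?_⟩
  simp only [← (hsum τ hτ hτ4).tsum_eq, hc, regularizedICoeff]
  push_cast [← Gamma_ofReal]
  rfl
end

section
/- Let λ be a positive irrational real number, k ∈ {0,1}, b ≥ 0 and C > 0. Let g : (0,∞) → C be measurable with |g(τ)| ≤ C·e^{bτ} for all τ > 0, and suppose that for every integer M ≥ 0 there exist constants K_M, δ_M > 0 such that |g(τ) − Σ_{m=0}^{M−1} c_{k,m} τ^{m+k/2+λ}| ≤ K_M · τ^{M+k/2+λ} for all 0 < τ < δ_M. Then for every integer M ≥ 0 there exist constants K′_M, q_M such that for all real q ≥ q_M, | q·∫₀^∞ e^{−qτ} g(τ) dτ − Σ_{m=0}^{M−1} [∏_{l=0}^{m−1}(−λ−(k/2+l))³ / (2m+k)!] · q^{−m−k/2−λ} | ≤ K′_M · q^{−M−k/2−λ}. In other words, q·∫₀^∞ e^{−qτ} g(τ) dτ admits the power series asymptotic expansion Σ_{m≥0} [∏_{l=0}^{m−1}(−λ−(k/2+l))³/(2m+k)!] q^{−m−k/2−λ} as q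 → +∞. -/
open MeasureTheory

/-!
Watson's lemma.  The Laplace integral is linear and sends `τ ^ a` to `Γ(a + 1) q ^ (-(a + 1))`, so
it suffices to bound the Laplace integral of the remainder `f`.  If `‖f τ‖ ≤ K τ ^ A` on `(0, δ)`
and `e ^ (-bτ) f` is integrable, then for `q ≥ b` and every `τ > 0`
`‖e ^ (-qτ) f τ‖ ≤ K τ ^ A e ^ (-qτ) + e ^ (-(q - b)δ) ‖e ^ (-bτ) f τ‖`.
On integrating, the first term gives `O(q ^ (-(A + 1)))` and the second is exponentially small.
The factors `Γ(1 + m + k/2 + λ)` produced by the powers of `τ` cancel the denominators of `c_{k,m}`.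
-/

open Set Filter Asymptotics
open scoped Topology

variable {E ι : Type*} [NormedAddCommGroup E]

lemma isBigO_rpow_nhdsGT_zero_iff {f : ℝ → E} {A : ℝ} :
    f =O[𝓝[>] 0] (fun τ : ℝ => τ ^ A) ↔
      ∃ K δ : ℝ, 0 < K ∧ 0 < δ ∧ ∀ τ : ℝ, 0 < τ → τ < δ → ‖f τ‖ ≤ K * τ ^ A := by
  constructor
  · intro h
    obtain ⟨K, hK, hbound⟩ := h.exists_pos
    obtain ⟨δ, hδ, hsub⟩ := mem_nhdsGT_iff_exists_Ioo_subset.1 hbound.bound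
    refine ⟨K, δ, hK, hδ, fun τ hτ hτδ => ?_⟩
    simpa only [mem_ofPred_eq, Real.norm_of_nonneg (Real.rpow_nonneg hτ.le A)] using hsub ⟨hτ, hτδ⟩
  · rintro ⟨K, δ, -, hδ, hK⟩
    refine .of_bound K ?_
    filter_upwards [Ioo_mem_nhdsGT hδ] with τ hτ
    simpa only [Real.norm_of_nonneg (Real.rpow_nonneg hτ.1.le A)] using hK τ hτ.1 hτ.2

lemma exists_forall_norm_le_mul_rpow {f : ℝ → E} {A : ℝ} (h : f =O[atTop] fun q : ℝ => q ^ A) :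
    ∃ K q₀ : ℝ, ∀ q : ℝ, q₀ ≤ q → ‖f q‖ ≤ K * q ^ A := by
  obtain ⟨K, hK⟩ := h.bound
  obtain ⟨q₀, hq₀⟩ := eventually_atTop.1 (hK.and (eventually_ge_atTop 0))
  refine ⟨K, q₀, fun q hq => ?_⟩
  obtain ⟨hle, hq0⟩ := hq₀ q hq
  rwa [Real.norm_of_nonneg (Real.rpow_nonneg hq0 A)] at hle

variable [NormedSpace ℝ E]

/-- Absolute convergence at the real parameter `q` of the Laplace integral of `f` over `(0, ∞)`;
values of `f` outside `(0, ∞)` are irrelevant. -/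
def LaplaceConvergent (f : ℝ → E) (q : ℝ) : Prop :=
  IntegrableOn (fun τ => Real.exp (-(q * τ)) • f τ) (Ioi 0)

/-- The Laplace integral `∫₀^∞ e ^ (-qτ) f τ dτ` at the real parameter `q`, with the junk value `0`
when it does not converge absolutely. -/
noncomputable def laplaceIntegral (f : ℝ → E) (q : ℝ) : E :=
  ∫ τ in Ioi 0, Real.exp (-(q * τ)) • f τ

section Laplace

variable {f g : ℝ → E} {a b q A C K δ : ℝ}

lemma LaplaceConvergent.sub (hf : LaplaceConvergent f q) (hg : LaplaceConvergent g q) :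
    LaplaceConvergent (fun τ => f τ - g τ) q := by
  simpa only [LaplaceConvergent, IntegrableOn, smul_sub] using Integrable.sub' hf hg

lemma LaplaceConvergent.finsetSum {s : Finset ι} {F : ι → ℝ → E}
    (hF : ∀ i ∈ s, LaplaceConvergent (F i) q) : LaplaceConvergent (fun τ => ∑ i ∈ s, F i τ) q := by
  simpa only [LaplaceConvergent, IntegrableOn, Finset.smul_sum] using integrable_finsetSum s hF

lemma laplaceIntegral_sub (hf : LaplaceConvergent f q) (hg : LaplaceConvergent g q) :
    laplaceIntegral (fun τ => f τ - g τ) q = laplaceIntegral f q - laplaceIntegral g q := by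
  simpa only [laplaceIntegral, smul_sub] using integral_sub hf hg

lemma laplaceIntegral_finsetSum {s : Finset ι} {F : ι → ℝ → E}
    (hF : ∀ i ∈ s, LaplaceConvergent (F i) q) :
    laplaceIntegral (fun τ => ∑ i ∈ s, F i τ) q = ∑ i ∈ s, laplaceIntegral (F i) q := by
  simpa only [laplaceIntegral, Finset.smul_sum] using integral_finsetSum s hF

lemma exp_neg_mul_smul_eq (f : ℝ → E) (b q τ : ℝ) :
    Real.exp (-(q * τ)) • f τ = Real.exp (-((q - b) * τ)) • Real.exp (-(b * τ)) • f τ := by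
  rw [smul_smul, ← Real.exp_add]
  ring_nf

lemma LaplaceConvergent.mono (hf : LaplaceConvergent f b) (hbq : b ≤ q) :
    LaplaceConvergent f q := by
  have hdamp_meas : AEStronglyMeasurable (fun τ : ℝ => Real.exp (-((q - b) * τ)))
      (volume.restrict (Ioi 0)) := by fun_prop
  have hdamp_le : ∀ᵐ τ : ℝ ∂volume.restrict (Ioi 0), ‖Real.exp (-((q - b) * τ))‖ ≤ 1 := by
    filter_upwards [ae_restrict_mem measurableSet_Ioi] with τ hτ
    rw [Real.norm_of_nonneg (Real.exp_nonneg _), Real.exp_le_one_iff, neg_nonpos]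
    exact mul_nonneg (sub_nonneg.2 hbq) (le_of_lt hτ)
  exact (Integrable.bdd_smul hf 1 hdamp_meas hdamp_le).congr
    (.of_forall fun τ => (exp_neg_mul_smul_eq f b q τ).symm)

lemma laplaceConvergent_of_norm_le_exp
    (hf_meas : AEStronglyMeasurable f (volume.restrict (Ioi 0)))
    (hf_bd : ∀ τ : ℝ, 0 < τ → ‖f τ‖ ≤ C * Real.exp (b * τ)) (hbq : b < q) :
    LaplaceConvergent f q := by
  have hdom : IntegrableOn (fun τ : ℝ => C * Real.exp (-(q - b) * τ)) (Ioi 0) :=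
    (exp_neg_integrableOn_Ioi 0 (sub_pos.2 hbq)).const_mul C
  refine hdom.mono' (AEStronglyMeasurable.smul (by fun_prop) hf_meas) ?_
  filter_upwards [ae_restrict_mem measurableSet_Ioi] with τ hτ
  calc ‖Real.exp (-(q * τ)) • f τ‖ = Real.exp (-(q * τ)) * ‖f τ‖ := by
        rw [norm_smul, Real.norm_of_nonneg (Real.exp_nonneg _)]
    _ ≤ Real.exp (-(q * τ)) * (C * Real.exp (b * τ)) := by gcongr; exact hf_bd τ hτ
    _ = C * Real.exp (-(q - b) * τ) := by
        rw [mul_left_comm, ← Real.exp_add]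
        ring_nf

lemma laplaceIntegral_rpow (ha : -1 < a) (hq : 0 < q) :
    laplaceIntegral (fun τ : ℝ => τ ^ a) q = Real.Gamma (a + 1) * q ^ (-(a + 1)) := by
  have hGamma := Real.integral_rpow_mul_exp_neg_mul_Ioi (neg_lt_iff_pos_add.1 ha) hq
  rw [add_sub_cancel_right, one_div, Real.inv_rpow hq.le, ← Real.rpow_neg hq.le] at hGamma
  simpa only [laplaceIntegral, smul_eq_mul, mul_comm] using hGamma

lemma laplaceConvergent_rpow (ha : -1 < a) (hq : 0 < q) :
    LaplaceConvergent (fun τ : ℝ => τ ^ a) q := by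
  simpa only [LaplaceConvergent, Real.rpow_one, neg_mul, smul_eq_mul, mul_comm (Real.exp _)] using
    integrableOn_rpow_mul_exp_neg_mul_rpow ha one_pos hq

lemma laplaceConvergent_rpow_smul (ha : -1 < a) (hq : 0 < q) (v : E) :
    LaplaceConvergent (fun τ : ℝ => τ ^ a • v) q := by
  simpa only [LaplaceConvergent, IntegrableOn, smul_assoc] using
    Integrable.smul_const (laplaceConvergent_rpow ha hq) v

lemma laplaceIntegral_rpow_smul [CompleteSpace E] (ha : -1 < a) (hq : 0 < q) (v : E) :
    laplaceIntegral (fun τ : ℝ => τ ^ a • v) q = (Real.Gamma (a + 1) * q ^ (-(a + 1))) • v := by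
  rw [← laplaceIntegral_rpow ha hq]
  simpa only [laplaceIntegral, smul_assoc] using
    integral_smul_const (fun τ : ℝ => Real.exp (-(q * τ)) • τ ^ a) v

lemma norm_exp_neg_mul_smul_le (hK : 0 ≤ K)
    (hnear : ∀ τ : ℝ, 0 < τ → τ < δ → ‖f τ‖ ≤ K * τ ^ A) (hbq : b ≤ q) {τ : ℝ} (hτ : 0 < τ) :
    ‖Real.exp (-(q * τ)) • f τ‖ ≤ K * (Real.exp (-(q * τ)) • τ ^ A) +
      Real.exp (-((q - b) * δ)) * ‖Real.exp (-(b * τ)) • f τ‖ := by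
  rcases lt_or_ge τ δ with hτδ | hδτ
  · refine le_add_of_le_of_nonneg ?_ (by positivity)
    rw [norm_smul, Real.norm_of_nonneg (Real.exp_nonneg _), smul_eq_mul, mul_left_comm]
    gcongr
    exact hnear τ hτ hτδ
  · refine le_add_of_nonneg_of_le (by positivity) ?_
    rw [exp_neg_mul_smul_eq f b q, norm_smul, Real.norm_of_nonneg (Real.exp_nonneg _)]
    gcongr

lemma norm_laplaceIntegral_le (hf : LaplaceConvergent f b) (hA : -1 < A) (hK : 0 ≤ K)
    (hnear : ∀ τ : ℝ, 0 < τ → τ < δ → ‖f τ‖ ≤ K * τ ^ A) (hq : 0 < q) (hbq : b ≤ q) :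
    ‖laplaceIntegral f q‖ ≤ K * (Real.Gamma (A + 1) * q ^ (-(A + 1))) +
      Real.exp (-((q - b) * δ)) * ∫ τ in Ioi 0, ‖Real.exp (-(b * τ)) • f τ‖ := by
  have hhead := (laplaceConvergent_rpow hA hq).const_mul K
  have htail := (Integrable.norm hf).const_mul (Real.exp (-((q - b) * δ)))
  calc ‖laplaceIntegral f q‖
      ≤ ∫ τ in Ioi 0, (K * (Real.exp (-(q * τ)) • τ ^ A) +
          Real.exp (-((q - b) * δ)) * ‖Real.exp (-(b * τ)) • f τ‖) := by
        refine norm_integral_le_of_norm_le (hhead.add htail) ?_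
        filter_upwards [ae_restrict_mem measurableSet_Ioi] with τ hτ
        exact norm_exp_neg_mul_smul_le hK hnear hbq hτ
    _ = _ := by
        rw [integral_add hhead htail, integral_const_mul, integral_const_mul,
          ← laplaceIntegral_rpow hA hq, laplaceIntegral]

theorem isBigO_laplaceIntegral_of_isBigO_rpow (hf : LaplaceConvergent f b) (hA : -1 < A)
    (hzero : f =O[𝓝[>] 0] fun τ : ℝ => τ ^ A) :
    laplaceIntegral f =O[atTop] fun q : ℝ => q ^ (-(A + 1)) := by
  obtain ⟨K, δ, hK, hδ, hnear⟩ := isBigO_rpow_nhdsGT_zero_iff.1 hzero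
  have hhead : (fun q : ℝ => K * (Real.Gamma (A + 1) * q ^ (-(A + 1)))) =O[atTop]
      fun q : ℝ => q ^ (-(A + 1)) := ((isBigO_refl _ _).const_mul_left _).const_mul_left _
  have hexp : (fun q : ℝ => Real.exp (-((q - b) * δ))) =O[atTop]
      fun q : ℝ => q ^ (-(A + 1)) := by
    refine ((isLittleO_exp_neg_mul_rpow_atTop hδ _).isBigO.const_mul_left
      (Real.exp (b * δ))).congr_left fun q => ?_
    rw [← Real.exp_add]
    ring_nf
  have htail : (fun q : ℝ => Real.exp (-((q - b) * δ)) *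
      ∫ τ in Ioi 0, ‖Real.exp (-(b * τ)) • f τ‖) =O[atTop] fun q : ℝ => q ^ (-(A + 1)) := by
    simpa only [mul_comm] using hexp.const_mul_left (∫ τ in Ioi 0, ‖Real.exp (-(b * τ)) • f τ‖)
  refine (IsBigO.of_norm_eventuallyLE ?_).trans
    (hhead.add htail)
  filter_upwards [eventually_gt_atTop 0, eventually_ge_atTop b] with q hq hbq
  exact norm_laplaceIntegral_le hf hA hK.le hnear hq hbq

theorem isBigO_laplaceIntegral_sub_sum_rpow [CompleteSpace E] {s : Finset ι} {α : ι → ℝ}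
    {v : ι → E} (hf : LaplaceConvergent f b) (hα : ∀ i ∈ s, -1 < α i) (hA : -1 < A)
    (hzero : (fun τ => f τ - ∑ i ∈ s, τ ^ α i • v i) =O[𝓝[>] 0] fun τ : ℝ => τ ^ A) :
    (fun q => laplaceIntegral f q - ∑ i ∈ s, (Real.Gamma (α i + 1) * q ^ (-(α i + 1))) • v i)
      =O[atTop] fun q : ℝ => q ^ (-(A + 1)) := by
  have hterm : ∀ q : ℝ, 0 < q → ∀ i ∈ s, LaplaceConvergent (fun τ => τ ^ α i • v i) q :=
    fun q hq i hi => laplaceConvergent_rpow_smul (hα i hi) hq (v i)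
  have hrem : LaplaceConvergent (fun τ => f τ - ∑ i ∈ s, τ ^ α i • v i) (max b 1) :=
    (hf.mono (le_max_left b 1)).sub (.finsetSum (hterm _ (by positivity)))
  refine (isBigO_laplaceIntegral_of_isBigO_rpow hrem hA hzero).congr' ?_ .rfl
  filter_upwards [eventually_gt_atTop 0, eventually_ge_atTop b] with q hq hbq
  rw [laplaceIntegral_sub (hf.mono hbq) (.finsetSum (hterm q hq)),
    laplaceIntegral_finsetSum (hterm q hq)]
  exact congrArg _ (Finset.sum_congr rfl fun i hi => laplaceIntegral_rpow_smul (hα i hi) hq (v i))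

end Laplace

lemma laplaceIntegral_eq_integral_cexp (g : ℝ → ℂ) (q : ℝ) :
    laplaceIntegral g q = ∫ τ in Ioi (0 : ℝ), Complex.exp (-(q : ℂ) * (τ : ℂ)) * g τ := by
  simp only [laplaceIntegral, Complex.real_smul, Complex.ofReal_exp, Complex.ofReal_neg,
    Complex.ofReal_mul, neg_mul]

theorem isBigO_mul_laplaceIntegral_sub_sum_rpow {g : ℝ → ℂ} {s : Finset ι} {α c : ι → ℝ} {b A : ℝ}
    (hg : LaplaceConvergent g b) (hα : ∀ i ∈ s, -1 < α i) (hA : -1 < A)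
    (hzero : (fun τ => g τ - ∑ i ∈ s, (c i : ℂ) * (τ : ℂ) ^ (α i : ℂ)) =O[𝓝[>] 0]
      fun τ : ℝ => τ ^ A) :
    (fun q : ℝ => (q : ℂ) * laplaceIntegral g q -
        ∑ i ∈ s, ((c i * Real.Gamma (α i + 1) : ℝ) : ℂ) * (q : ℂ) ^ (-(α i : ℂ)))
      =O[atTop] fun q : ℝ => q ^ (-A) := by
  have hshift : ∀ {q : ℝ} (x : ℝ), 0 < q → q * q ^ (-(x + 1)) = q ^ (-x) := fun x hq => by
    rw [neg_add, ← sub_eq_add_neg, Real.rpow_sub_one hq.ne', mul_div_cancel₀ _ hq.ne']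
  have hzero_smul : (fun τ => g τ - ∑ i ∈ s, τ ^ α i • (c i : ℂ)) =O[𝓝[>] 0]
      fun τ : ℝ => τ ^ A := by
    refine hzero.congr' ?_ .rfl
    filter_upwards [self_mem_nhdsWithin] with τ (hτ : 0 < τ)
    simp only [Complex.real_smul, Complex.ofReal_cpow hτ.le, mul_comm]
  have hid : (fun q : ℝ => (q : ℂ)) =O[atTop] fun q : ℝ => q :=
    Complex.isBigO_ofReal_left.2 (isBigO_refl _ _)
  refine (hid.mul (isBigO_laplaceIntegral_sub_sum_rpow hg hα hA hzero_smul)).congr' ?_ ?_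
  · filter_upwards [eventually_gt_atTop 0] with q hq
    rw [mul_sub, Finset.mul_sum]
    refine congrArg _ (Finset.sum_congr rfl fun i _ => ?_)
    rw [Complex.real_smul, ← Complex.ofReal_neg, ← Complex.ofReal_cpow hq.le, ← hshift (α i) hq]
    push_cast
    ring
  · filter_upwards [eventually_gt_atTop 0] with q hq
    exact hshift A hq

theorem stmt_5_general {lam b : ℝ} {k M : ℕ} (hlam : -1 < (k : ℝ) / 2 + lam) {c : ℕ → ℝ}
    (hc : ∀ m : ℕ, c m =
      (∏ l ∈ Finset.range m, (-lam - ((k : ℝ) / 2 + (l : ℝ))) ^ 3) /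
        (Real.Gamma (1 + (m : ℝ) + (k : ℝ) / 2 + lam) * ((2 * m + k).factorial : ℝ)))
    {g : ℝ → ℂ} (hg : LaplaceConvergent g b)
    (hg_asym : (fun τ : ℝ => g τ - ∑ m ∈ Finset.range M,
        (c m : ℂ) * (τ : ℂ) ^ ((m : ℂ) + (k : ℂ) / 2 + (lam : ℂ)))
      =O[𝓝[>] 0] fun τ : ℝ => τ ^ ((M : ℝ) + (k : ℝ) / 2 + lam)) :
    (fun q : ℝ =>
      (q : ℂ) * (∫ τ in Set.Ioi (0 : ℝ), Complex.exp (-(q : ℂ) * (τ : ℂ)) * g τ)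
        - ∑ m ∈ Finset.range M,
            (((∏ l ∈ Finset.range m, (-lam - ((k : ℝ) / 2 + (l : ℝ))) ^ 3) /
                ((2 * m + k).factorial : ℝ) : ℝ) : ℂ) *
              (q : ℂ) ^ (-((m : ℂ) + (k : ℂ) / 2 + (lam : ℂ))))
      =O[atTop] fun q : ℝ => q ^ (-((M : ℝ) + (k : ℝ) / 2 + lam)) := by
  have hα : ∀ m : ℕ, -1 < (m : ℝ) + (k : ℝ) / 2 + lam := fun m => by
    linarith [m.cast_nonneg (α := ℝ)]
  have hcast : ∀ m : ℕ, (m : ℂ) + (k : ℂ) / 2 + (lam : ℂ) =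
      (((m : ℝ) + (k : ℝ) / 2 + lam : ℝ) : ℂ) := fun m => by push_cast; rfl
  have hGamma_cancel : ∀ m : ℕ, (∏ l ∈ Finset.range m, (-lam - ((k : ℝ) / 2 + (l : ℝ))) ^ 3) /
      ((2 * m + k).factorial : ℝ) = c m * Real.Gamma ((m : ℝ) + (k : ℝ) / 2 + lam + 1) := by
    intro m
    have hGamma := (Real.Gamma_pos_of_pos (neg_lt_iff_pos_add.1 (hα m))).ne'
    rw [hc m, show 1 + (m : ℝ) + (k : ℝ) / 2 + lam = m + (k : ℝ) / 2 + lam + 1 by ring]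
    rw [div_mul_eq_mul_div, mul_comm (Real.Gamma _), mul_div_mul_right _ _ hGamma]
  simp only [hcast, hGamma_cancel, ← laplaceIntegral_eq_integral_cexp] at hg_asym ⊢
  exact isBigO_mul_laplaceIntegral_sub_sum_rpow hg (fun m _ => hα m) (hα M) hg_asym

/-- Watson's lemma for the `[ℂ³/ℤ₂]` example.  Fix a positive irrational
real `λ`, `k ∈ {0,1}`, `b ≥ 0`, `C > 0`, and let
`c_{k,m} = [∏_{l=0}^{m−1} (−λ−(k/2+l))³] / [Γ(1+m+k/2+λ)·(2m+k)!]`.  If `g : (0,∞) → ℂ` is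
measurable with `|g(τ)| ≤ C·e^{bτ}`, and for every `M ≥ 0` one has
`|g(τ) − Σ_{m<M} c_{k,m} τ^{m+k/2+λ}| ≤ K_M·τ^{M+k/2+λ}` for small `τ > 0`, then
`q·∫₀^∞ e^{−qτ} g(τ) dτ` admits the power series asymptotic expansion
`Σ_{m≥0} [∏_{l=0}^{m−1}(−λ−(k/2+l))³/(2m+k)!]·q^{−m−k/2−λ}` as `q → +∞`. -/
theorem stmt_5 (lam : ℝ) (hpos : 0 < lam) (hirr : Irrational lam)
    (k : ℕ) (hk : k ≤ 1)
    (c : ℕ → ℝ)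
    (hc : ∀ m : ℕ, c m =
      (∏ l ∈ Finset.range m, (-lam - ((k : ℝ) / 2 + (l : ℝ))) ^ 3) /
        (Real.Gamma (1 + (m : ℝ) + (k : ℝ) / 2 + lam) * ((2 * m + k).factorial : ℝ)))
    (b C : ℝ) (hb : 0 ≤ b) (hC : 0 < C)
    (g : ℝ → ℂ) (hg_meas : Measurable g)
    (hg_bd : ∀ τ : ℝ, 0 < τ → ‖g τ‖ ≤ C * Real.exp (b * τ))
    (hg_asym : ∀ M : ℕ, ∃ K δ : ℝ, 0 < K ∧ 0 < δ ∧ ∀ τ : ℝ, 0 < τ → τ < δ →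
      ‖g τ - ∑ m ∈ Finset.range M,
          (c m : ℂ) * (τ : ℂ) ^ ((m : ℂ) + (k : ℂ) / 2 + (lam : ℂ))‖
        ≤ K * τ ^ ((M : ℝ) + (k : ℝ) / 2 + lam)) :
    ∀ M : ℕ, ∃ K' q₀ : ℝ, ∀ q : ℝ, q₀ ≤ q →
      ‖(q : ℂ) * (∫ τ in Set.Ioi (0 : ℝ), Complex.exp (-(q : ℂ) * (τ : ℂ)) * g τ)
        - ∑ m ∈ Finset.range M,
            (((∏ l ∈ Finset.range m, (-lam - ((k : ℝ) / 2 + (l : ℝ))) ^ 3) /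
                ((2 * m + k).factorial : ℝ) : ℝ) : ℂ) *
              (q : ℂ) ^ (-((m : ℂ) + (k : ℂ) / 2 + (lam : ℂ)))‖
        ≤ K' * q ^ (-((M : ℝ) + (k : ℝ) / 2 + lam)) := by
  intro M
  have hg : LaplaceConvergent g (b + 1) :=
    laplaceConvergent_of_norm_le_exp hg_meas.aestronglyMeasurable hg_bd (lt_add_one b)
  have hlam : -1 < (k : ℝ) / 2 + lam := by linarith [k.cast_nonneg (α := ℝ)]
  exact exists_forall_norm_le_mul_rpow
    (stmt_5_general hlam hc hg (isBigO_rpow_nhdsGT_zero_iff.2 (hg_asym M)))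
end

section
/- Let λ be a real number with λ ≥ 3, and let g : (0,∞) → C be three times continuously differentiable such that: (i) (τ³+4τ²)·g‴(τ) + (3τ² + (10−8λ)τ)·g″(τ) + (τ + (2−2λ)(1−2λ))·g′(τ) = 0 for all τ > 0; (ii) g(τ), g′(τ), g″(τ), g‴(τ) all tend to 0 as τ → 0⁺; (iii) there exist constants C, p with |g^{(j)}(τ)| ≤ C(1+τ)^p for all τ > 0 and 0 ≤ j ≤ 3. Then F(q) := q·∫₀^∞ e^{−qτ} g(τ) dτ is well defined and infinitely differentiable on (0,∞) and satisfies [θ_q³ − q·(−2θ_q−2λ)(−2θ_q−2λ−1)] F(q) = 0 for all q > 0, where θ_q is the Euler operator θ_q F(q) = q·F′(q). -/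
open MeasureTheory

/-- The Euler operator `θ f (τ) = τ · f′(τ)` acting on complex-valued functions of a real
variable. -/
noncomputable def eulerOp (f : ℝ → ℂ) : ℝ → ℂ := fun τ => (τ : ℂ) * deriv f τ

/-! Write `Λ f (q) = q ∫₀^∞ e^{-qτ} f(τ) dτ`. When `f(0⁺) = 0`, the transform satisfies
`Λ (f') = q Λ f` and `Λ (θ f) = -θ_q Λ f`. The differential equation for `g` reads
`θ³ g + d/dτ [(2θ - 2λ)(2θ - 2λ - 1) g] = 0`, and applying `Λ` to it gives the equation for
`F = Λ g`. -/

open Set Filter Topology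

theorem integral_Ioi_eq_sub_of_hasDerivAt_of_tendsto {E : Type*} [NormedAddCommGroup E]
    [NormedSpace ℝ E] [CompleteSpace E] {f f' : ℝ → E} {a : ℝ} {l m : E}
    (hderiv : ∀ x ∈ Ioi a, HasDerivAt f (f' x) x) (hint : IntegrableOn f' (Ioi a))
    (hl : Tendsto f (𝓝[>] a) (𝓝 l)) (hm : Tendsto f atTop (𝓝 m)) :
    ∫ x in Ioi a, f' x = m - l := by
  have hupdate : ∀ x, x ≠ a → f x = Function.update f a l x := fun x hx =>
    (Function.update_of_ne hx l f).symm
  have hcont : ContinuousWithinAt (Function.update f a l) (Ici a) a := by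
    rwa [continuousWithinAt_update_same, Ici_sdiff_left]
  have hderiv' : ∀ x ∈ Ioi a, HasDerivAt (Function.update f a l) (f' x) x := fun x hx =>
    (hderiv x hx).congr_of_eventuallyEq
      ((eventually_ne_nhds (ne_of_gt hx)).mono fun y hy => (hupdate y hy).symm)
  simpa using integral_Ioi_of_hasDerivAt_of_tendsto hcont hderiv' hint
    (hm.congr' ((eventually_ne_atTop a).mono hupdate))

section Laplace

variable {E : Type*} [NormedAddCommGroup E] [NormedSpace ℂ E] {σ : ℝ} {s : ℂ} {f g : ℝ → E}

/-- The Laplace transform `s ↦ ∫₀^∞ e^{-sτ} f(τ) dτ`, as a function of a complex variable. -/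
noncomputable def laplace (f : ℝ → E) (s : ℂ) : E :=
  ∫ τ in Ioi (0 : ℝ), Complex.exp (-s * (τ : ℂ)) • f τ

/-- The Laplace integral of `f` converges absolutely on the half-plane `σ < re s`. -/
def LaplaceIntegrable (σ : ℝ) (f : ℝ → E) : Prop :=
  ∀ s : ℂ, σ < s.re → IntegrableOn (fun τ : ℝ => Complex.exp (-s * (τ : ℂ)) • f τ) (Ioi 0)

theorem norm_cexp_neg_mul_ofReal (s : ℂ) (τ : ℝ) :
    ‖Complex.exp (-s * (τ : ℂ))‖ = Real.exp (-s.re * τ) := by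
  simp [Complex.norm_exp]

theorem LaplaceIntegrable.congr (hf : LaplaceIntegrable σ f) (h : EqOn f g (Ioi 0)) :
    LaplaceIntegrable σ g := fun s hs =>
  (hf s hs).congr_fun (fun τ hτ => by simp only [h hτ]) measurableSet_Ioi

theorem LaplaceIntegrable.smul_add_smul (hf : LaplaceIntegrable σ f) (hg : LaplaceIntegrable σ g)
    (a b : ℂ) : LaplaceIntegrable σ (fun τ => a • f τ + b • g τ) := fun s hs => by
  simpa only [smul_add, smul_comm _ a, smul_comm _ b] using!
    ((hf s hs).smul a).add ((hg s hs).smul b)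

theorem LaplaceIntegrable.id_smul (hf : LaplaceIntegrable σ f) :
    LaplaceIntegrable σ (fun τ => (τ : ℂ) • f τ) := by
  intro s hs
  obtain ⟨m, hσm, hms⟩ := exists_between hs
  have hδ : 0 < s.re - m := sub_pos.mpr hms
  have hmeas : AEStronglyMeasurable (fun τ : ℝ => Complex.exp (-s * (τ : ℂ)) • (τ : ℂ) • f τ)
      (volume.restrict (Ioi 0)) := by
    simpa only [smul_comm (Complex.exp _)] using!
      Complex.continuous_ofReal.aestronglyMeasurable.smul (hf s hs).aestronglyMeasurable
  refine ((hf m hσm).norm.const_mul (s.re - m)⁻¹).mono' hmeas ?_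
  filter_upwards [ae_restrict_mem measurableSet_Ioi] with τ (hτ : 0 < τ)
  have hlin : τ ≤ (s.re - m)⁻¹ * Real.exp ((s.re - m) * τ) := by
    rw [le_inv_mul_iff₀ hδ]
    linarith [Real.add_one_le_exp ((s.re - m) * τ)]
  have hexp : Real.exp (-s.re * τ) * Real.exp ((s.re - m) * τ) = Real.exp (-m * τ) := by
    rw [← Real.exp_add]
    ring_nf
  simp only [norm_smul, norm_cexp_neg_mul_ofReal, Complex.norm_of_nonneg hτ.le, Complex.ofReal_re]
  calc Real.exp (-s.re * τ) * (τ * ‖f τ‖)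
      ≤ Real.exp (-s.re * τ) * ((s.re - m)⁻¹ * Real.exp ((s.re - m) * τ) * ‖f τ‖) := by gcongr
    _ = (s.re - m)⁻¹ * (Real.exp (-s.re * τ) * Real.exp ((s.re - m) * τ) * ‖f τ‖) := by ring
    _ = (s.re - m)⁻¹ * (Real.exp (-m * τ) * ‖f τ‖) := by rw [hexp]

theorem integrableOn_exp_neg_mul_one_add_rpow (p : ℝ) {r : ℝ} (hr : 0 < r) :
    IntegrableOn (fun τ : ℝ => Real.exp (-r * τ) * (1 + τ) ^ p) (Ioi 0) := by
  have hcont : ContinuousOn (fun τ : ℝ => Real.exp (-r * τ) * (1 + τ) ^ p) (Ici 0) := by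
    refine ContinuousOn.mul (by fun_prop) (ContinuousOn.rpow_const (by fun_prop) fun τ hτ => ?_)
    exact Or.inl (by linarith [mem_Ici.mp hτ])
  have hpow : (fun τ : ℝ => (1 + τ) ^ p) =O[atTop] fun τ => Real.exp (r / 2 * (1 + τ)) :=
    ((isLittleO_rpow_exp_pos_mul_atTop p (half_pos hr)).comp_tendsto
      (tendsto_atTop_add_const_left _ 1 tendsto_id)).isBigO
  refine integrable_of_isBigO_exp_neg (half_pos hr) hcont
    (((Asymptotics.isBigO_refl (fun τ => Real.exp (-r * τ)) atTop).mul hpow).trans ?_)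
  refine Asymptotics.IsBigO.of_bound (Real.exp (r / 2)) (Eventually.of_forall fun τ => ?_)
  rw [← Real.exp_add, Real.norm_of_nonneg (Real.exp_nonneg _),
    Real.norm_of_nonneg (Real.exp_nonneg _), ← Real.exp_add]
  exact (congrArg Real.exp (by ring)).le

theorem LaplaceIntegrable.of_norm_le_rpow {C p : ℝ}
    (hmeas : AEStronglyMeasurable f (volume.restrict (Ioi 0)))
    (hbound : ∀ τ : ℝ, 0 < τ → ‖f τ‖ ≤ C * (1 + τ) ^ p) : LaplaceIntegrable 0 f := by
  intro s hs
  have hexp : Continuous fun τ : ℝ => Complex.exp (-s * (τ : ℂ)) := by fun_prop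
  refine ((integrableOn_exp_neg_mul_one_add_rpow p hs).const_mul C).mono'
    (hexp.aestronglyMeasurable.smul hmeas) ?_
  filter_upwards [ae_restrict_mem measurableSet_Ioi] with τ hτ
  rw [norm_smul, norm_cexp_neg_mul_ofReal, mul_left_comm]
  exact mul_le_mul_of_nonneg_left (hbound τ hτ) (Real.exp_nonneg _)

theorem laplace_congr (h : EqOn f g (Ioi 0)) (s : ℂ) : laplace f s = laplace g s :=
  setIntegral_congr_fun measurableSet_Ioi fun τ hτ => by simp only [h hτ]

theorem laplace_smul_add_smul (hf : LaplaceIntegrable σ f) (hg : LaplaceIntegrable σ g)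
    (a b : ℂ) (hs : σ < s.re) :
    laplace (fun τ => a • f τ + b • g τ) s = a • laplace f s + b • laplace g s := by
  simp only [laplace, ← integral_smul, smul_add, smul_comm _ a, smul_comm _ b]
  exact integral_add ((hf s hs).smul a) ((hg s hs).smul b)

theorem hasDerivAt_laplace (hf : LaplaceIntegrable σ f) (hs : σ < s.re) :
    HasDerivAt (laplace f) (-laplace (fun τ => (τ : ℂ) • f τ) s) s := by
  obtain ⟨m, hσm, hms⟩ := exists_between hs
  have hmem : {z : ℂ | m < z.re} ∈ 𝓝 s := (Complex.isOpen_re_gt m).mem_nhds hms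
  have hderiv : ∀ (τ : ℝ) (z : ℂ), HasDerivAt (fun z => Complex.exp (-z * (τ : ℂ)) • f τ)
      (-(Complex.exp (-z * (τ : ℂ)) • (τ : ℂ) • f τ)) z := fun τ z => by
    convert ((hasDerivAt_neg z).mul_const (τ : ℂ)).cexp.smul_const (f τ) using 1
    rw [smul_smul, ← neg_smul]
    ring_nf
  have hdom : ∀ᵐ τ : ℝ ∂volume.restrict (Ioi 0), ∀ z ∈ {z : ℂ | m < z.re},
      ‖-(Complex.exp (-z * (τ : ℂ)) • (τ : ℂ) • f τ)‖
        ≤ ‖Complex.exp (-(m : ℂ) * (τ : ℂ)) • (τ : ℂ) • f τ‖ := by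
    filter_upwards [ae_restrict_mem measurableSet_Ioi] with τ (hτ : 0 < τ) z (hz : m < z.re)
    rw [norm_neg, norm_smul, norm_smul _ ((τ : ℂ) • f τ), norm_cexp_neg_mul_ofReal,
      norm_cexp_neg_mul_ofReal, Complex.ofReal_re]
    gcongr
  have hintegral := (hasDerivAt_integral_of_dominated_loc_of_deriv_le
    (F := fun z (τ : ℝ) => Complex.exp (-z * (τ : ℂ)) • f τ) hmem
    (by filter_upwards [hmem] with z hz using (hf z (hσm.trans hz)).aestronglyMeasurable)
    (hf s hs) (hf.id_smul s hs).aestronglyMeasurable.neg hdom (hf.id_smul m hσm).norm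
    (Eventually.of_forall fun τ z _ => hderiv τ z)).2
  rwa [integral_neg] at hintegral

theorem contDiffOn_laplace_ofReal [CompleteSpace E] (hf : LaplaceIntegrable σ f) :
    ContDiffOn ℝ (⊤ : ℕ∞) (fun q : ℝ => laplace f q) (Ioi σ) := by
  have hol : DifferentiableOn ℂ (laplace f) {s | σ < s.re} := fun s hs =>
    (hasDerivAt_laplace hf hs).differentiableAt.differentiableWithinAt
  exact ((hol.contDiffOn (Complex.isOpen_re_gt σ)).restrict_scalars ℝ).comp
    Complex.ofRealCLM.contDiff.contDiffOn fun q hq => hq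

/-- `f` is `n` times differentiable on `(0,∞)`, its derivatives of order `< n` vanish at `0⁺`, and
those of order `≤ n` have a Laplace integral converging for `σ < re s`: the class on which the
Laplace transform turns `n` derivatives into multiplications without boundary terms. -/
structure LaplaceRegular (σ : ℝ) (n : ℕ) (f : ℝ → E) : Prop where
  differentiableOn : ∀ j < n, DifferentiableOn ℝ (deriv^[j] f) (Ioi 0)
  tendsto_zero : ∀ j < n, Tendsto (deriv^[j] f) (𝓝[>] 0) (𝓝 0)
  laplaceIntegrable : ∀ j ≤ n, LaplaceIntegrable σ (deriv^[j] f)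

namespace LaplaceRegular

variable {n : ℕ}

theorem zero_iff : LaplaceRegular σ 0 f ↔ LaplaceIntegrable σ f :=
  ⟨fun h => h.laplaceIntegrable 0 le_rfl, fun h => ⟨by simp, by simp, by simpa using h⟩⟩

theorem succ_iff : LaplaceRegular σ (n + 1) f ↔
    (DifferentiableOn ℝ f (Ioi 0) ∧ Tendsto f (𝓝[>] 0) (𝓝 0) ∧ LaplaceIntegrable σ f) ∧
      LaplaceRegular σ n (deriv f) := by
  constructor
  · rintro ⟨hd, ht, hi⟩
    exact ⟨⟨hd 0 n.succ_pos, ht 0 n.succ_pos, hi 0 (Nat.zero_le _)⟩,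
      fun j hj => hd (j + 1) (by omega), fun j hj => ht (j + 1) (by omega),
      fun j hj => hi (j + 1) (by omega)⟩
  · rintro ⟨⟨hd, ht, hi⟩, hd', ht', hi'⟩
    refine ⟨fun j hj => ?_, fun j hj => ?_, fun j hj => ?_⟩ <;> cases j
    exacts [hd, hd' _ (by omega), ht, ht' _ (by omega), hi, hi' _ (by omega)]

theorem laplaceIntegrable_self (hf : LaplaceRegular σ n f) : LaplaceIntegrable σ f :=
  hf.laplaceIntegrable 0 n.zero_le

theorem mono {m : ℕ} (hf : LaplaceRegular σ n f) (hmn : m ≤ n) : LaplaceRegular σ m f :=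
  ⟨fun j hj => hf.differentiableOn j (hj.trans_le hmn),
    fun j hj => hf.tendsto_zero j (hj.trans_le hmn),
    fun j hj => hf.laplaceIntegrable j (hj.trans hmn)⟩

theorem hasDerivAt (hf : LaplaceRegular σ (n + 1) f) {τ : ℝ} (hτ : 0 < τ) :
    HasDerivAt f (deriv f τ) τ :=
  ((succ_iff.mp hf).1.1.differentiableAt (Ioi_mem_nhds hτ)).hasDerivAt

theorem congr (hf : LaplaceRegular σ n f) (h : EqOn f g (Ioi 0)) : LaplaceRegular σ n g := by
  induction n generalizing f g with
  | zero => exact zero_iff.mpr ((zero_iff.mp hf).congr h)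
  | succ n ih =>
    obtain ⟨⟨hd, ht, hi⟩, hf'⟩ := succ_iff.mp hf
    exact succ_iff.mpr ⟨⟨hd.congr h.symm, ht.congr' h.eventuallyEq_nhdsWithin, hi.congr h⟩,
      ih hf' (h.deriv isOpen_Ioi)⟩

theorem smul_add_smul (hf : LaplaceRegular σ n f) (hg : LaplaceRegular σ n g) (a b : ℂ) :
    LaplaceRegular σ n (fun τ => a • f τ + b • g τ) := by
  induction n generalizing f g with
  | zero => exact zero_iff.mpr ((zero_iff.mp hf).smul_add_smul (zero_iff.mp hg) a b)
  | succ n ih =>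
    obtain ⟨⟨hfd, hft, hfi⟩, hf'⟩ := succ_iff.mp hf
    obtain ⟨⟨hgd, hgt, hgi⟩, hg'⟩ := succ_iff.mp hg
    refine succ_iff.mpr ⟨⟨(hfd.const_smul a).add (hgd.const_smul b), ?_,
      hfi.smul_add_smul hgi a b⟩, (ih hf' hg').congr fun τ hτ => ?_⟩
    · simpa using (hft.const_smul a).add (hgt.const_smul b)
    · exact (((hf.hasDerivAt hτ).const_smul a).add ((hg.hasDerivAt hτ).const_smul b)).deriv.symm

theorem id_smul (hf : LaplaceRegular σ n f) : LaplaceRegular σ n (fun τ => (τ : ℂ) • f τ) := by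
  induction n generalizing f with
  | zero => exact zero_iff.mpr (zero_iff.mp hf).id_smul
  | succ n ih =>
    obtain ⟨⟨-, ht, hi⟩, hf'⟩ := succ_iff.mp hf
    have hderiv : ∀ τ : ℝ, 0 < τ →
        HasDerivAt (fun τ : ℝ => (τ : ℂ) • f τ) ((τ : ℂ) • deriv f τ + (1 : ℂ) • f τ) τ :=
      fun τ hτ => Complex.ofRealCLM.hasDerivAt.smul (hf.hasDerivAt hτ)
    refine succ_iff.mpr ⟨⟨fun τ hτ => (hderiv τ hτ).differentiableAt.differentiableWithinAt, ?_,
      hi.id_smul⟩, ((ih hf').smul_add_smul (hf.mono n.le_succ) 1 1).congr fun τ hτ => ?_⟩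
    · simpa using ((Complex.continuous_ofReal.tendsto 0).mono_left nhdsWithin_le_nhds).smul ht
    · simp only [(hderiv τ hτ).deriv, one_smul]

end LaplaceRegular

theorem laplace_deriv [CompleteSpace E] (hf : LaplaceRegular σ 1 f) (hs : σ < s.re) :
    laplace (deriv f) s = s • laplace f s := by
  obtain ⟨⟨-, ht, hi⟩, hf'⟩ := LaplaceRegular.succ_iff.mp hf
  have hi' := LaplaceRegular.zero_iff.mp hf'
  have hderiv : ∀ τ ∈ Ioi (0 : ℝ), HasDerivAt (fun τ : ℝ => Complex.exp (-s * (τ : ℂ)) • f τ)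
      (Complex.exp (-s * (τ : ℂ)) • ((1 : ℂ) • deriv f τ + (-s) • f τ)) τ := fun τ hτ => by
    have hexp : HasDerivAt (fun τ : ℝ => Complex.exp (-s * (τ : ℂ)))
        (Complex.exp (-s * (τ : ℂ)) * (-s * 1)) τ :=
      (Complex.ofRealCLM.hasDerivAt.const_mul (-s)).cexp
    refine (hexp.smul (hf.hasDerivAt hτ)).congr_deriv ?_
    simp only [smul_add, smul_smul, mul_one]
  have hint := hi'.smul_add_smul hi 1 (-s) s hs
  have hzero : Tendsto (fun τ : ℝ => Complex.exp (-s * (τ : ℂ)) • f τ) (𝓝[>] 0) (𝓝 0) := by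
    have hexp : Continuous fun τ : ℝ => Complex.exp (-s * (τ : ℂ)) := by fun_prop
    simpa using ((hexp.tendsto 0).mono_left nhdsWithin_le_nhds).smul ht
  have htop := tendsto_zero_of_hasDerivAt_of_integrableOn_Ioi hderiv hint (hi s hs)
  have hftc : laplace (fun τ => (1 : ℂ) • deriv f τ + (-s) • f τ) s = 0 :=
    (integral_Ioi_eq_sub_of_hasDerivAt_of_tendsto hderiv hint hzero htop).trans (sub_zero 0)
  rw [laplace_smul_add_smul hi' hi 1 (-s) hs, one_smul, neg_smul] at hftc
  exact add_neg_eq_zero.mp hftc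

end Laplace

section EulerOperator

/-- The first-order operator `c θ - a`; the factors of both Picard–Fuchs equations have this form.
The sign convention is chosen so that the transform only replaces `c` by `-c`. In particular
`eulerAffine (-1) 0` is `-θ`. -/
noncomputable def eulerAffine (c a : ℂ) (f : ℝ → ℂ) : ℝ → ℂ := fun τ => c * eulerOp f τ - a * f τ

variable {f : ℝ → ℂ} (c a b : ℂ)

theorem eulerOp_eq_eulerAffine (f : ℝ → ℂ) : eulerOp f = eulerAffine 1 0 f := by
  funext τ
  simp [eulerAffine]

theorem eqOn_eulerAffine {g : ℝ → ℂ} {U : Set ℝ} (hU : IsOpen U) (h : EqOn f g U) :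
    EqOn (eulerAffine c a f) (eulerAffine c a g) U := fun τ hτ => by
  simp only [eulerAffine, eulerOp, h hτ, h.deriv hU hτ]

theorem eulerAffine_eulerAffine {τ : ℝ} (hf : DifferentiableAt ℝ f τ)
    (hf' : DifferentiableAt ℝ (deriv f) τ) :
    eulerAffine c a (eulerAffine c b f) τ
      = c ^ 2 * (τ : ℂ) ^ 2 * deriv^[2] f τ + c * (c - a - b) * (τ : ℂ) * deriv f τ
        + a * b * f τ := by
  have hderiv := (((Complex.ofRealCLM.hasDerivAt (x := τ)).mul hf'.hasDerivAt).const_mul c).sub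
    (hf.hasDerivAt.const_mul b)
  have hval : deriv (eulerAffine c b f) τ = _ := hderiv.deriv
  simp only [eulerAffine, eulerOp] at hval ⊢
  rw [hval]
  simp only [Complex.ofRealCLM_apply, Complex.ofReal_one, Function.iterate_succ_apply,
    Function.iterate_zero_apply]
  ring

theorem deriv_eulerAffine_eulerAffine {U : Set ℝ} (hU : IsOpen U)
    (hf : ∀ j < 3, DifferentiableOn ℝ (deriv^[j] f) U) {τ : ℝ} (hτ : τ ∈ U) :
    deriv (eulerAffine c a (eulerAffine c b f)) τ
      = c ^ 2 * (τ : ℂ) ^ 2 * deriv^[3] f τ + c * (3 * c - a - b) * (τ : ℂ) * deriv^[2] f τ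
        + (a - c) * (b - c) * deriv f τ := by
  have hdiff : ∀ j < 3, ∀ x ∈ U, DifferentiableAt ℝ (deriv^[j] f) x := fun j hj x hx =>
    (hf j hj).differentiableAt (hU.mem_nhds hx)
  have hexpand : EqOn (eulerAffine c a (eulerAffine c b f)) (fun x => c ^ 2 * (x : ℂ) ^ 2
      * deriv^[2] f x + c * (c - a - b) * (x : ℂ) * deriv f x + a * b * f x) U := fun x hx =>
    eulerAffine_eulerAffine c a b (hdiff 0 (by norm_num) x hx) (hdiff 1 (by norm_num) x hx)
  have hid : HasDerivAt (fun x : ℝ => (x : ℂ)) 1 τ := Complex.ofRealCLM.hasDerivAt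
  have hderiv := ((((hid.pow 2).const_mul (c ^ 2)).mul
      (hdiff 2 (by norm_num) τ hτ).hasDerivAt).add
    ((hid.const_mul (c * (c - a - b))).mul (hdiff 1 (by norm_num) τ hτ).hasDerivAt)).add
    ((hdiff 0 (by norm_num) τ hτ).hasDerivAt.const_mul (a * b))
  refine (hexpand.deriv hU hτ).trans (hderiv.deriv.trans ?_)
  simp only [Pi.pow_apply, Function.iterate_succ_apply, Function.iterate_zero_apply]
  ring

theorem LaplaceRegular.eulerAffine {σ : ℝ} {n : ℕ} (hf : LaplaceRegular σ (n + 1) f) :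
    LaplaceRegular σ n (eulerAffine c a f) := by
  have hθ : LaplaceRegular σ n (eulerOp f) := (LaplaceRegular.succ_iff.mp hf).2.id_smul
  simpa only [smul_eq_mul, neg_mul, ← sub_eq_add_neg] using!
    hθ.smul_add_smul (hf.mono n.le_succ) c (-a)

end EulerOperator

section LaplaceCarson

variable {σ : ℝ} {f F : ℝ → ℂ}

/-- The Laplace–Carson transform `q ↦ q ∫₀^∞ e^{-qτ} f(τ) dτ` on the real axis. The extra factor
`q` makes it intertwine the Euler operators up to sign. -/
noncomputable def laplaceCarson (f : ℝ → ℂ) : ℝ → ℂ := fun q => (q : ℂ) * laplace f q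

theorem laplaceCarson_mul_add_mul {g : ℝ → ℂ} (a b : ℂ) (hf : LaplaceIntegrable σ f)
    (hg : LaplaceIntegrable σ g) {q : ℝ} (hq : σ < q) :
    laplaceCarson (fun τ => a * f τ + b * g τ) q
      = a * laplaceCarson f q + b * laplaceCarson g q := by
  have hadd := laplace_smul_add_smul (s := q) hf hg a b hq
  simp only [smul_eq_mul] at hadd
  simp only [laplaceCarson, hadd]
  ring

theorem contDiffOn_laplaceCarson (hf : LaplaceIntegrable σ f) :
    ContDiffOn ℝ (⊤ : ℕ∞) (laplaceCarson f) (Ioi σ) :=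
  Complex.ofRealCLM.contDiff.contDiffOn.mul (contDiffOn_laplace_ofReal hf)

theorem laplaceCarson_deriv (hf : LaplaceRegular σ 1 f) {q : ℝ} (hq : σ < q) :
    laplaceCarson (deriv f) q = (q : ℂ) * laplaceCarson f q := by
  simp only [laplaceCarson, laplace_deriv hf (s := q) hq, smul_eq_mul]

theorem eulerOp_laplaceCarson (hf : LaplaceRegular σ 1 f) {q : ℝ} (hq : σ < q) :
    eulerOp (laplaceCarson f) q = -laplaceCarson (eulerOp f) q := by
  have hf' := LaplaceRegular.zero_iff.mp (LaplaceRegular.succ_iff.mp hf).2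
  have hlaplace : EqOn (laplaceCarson f) (fun q : ℝ => laplace (deriv f) q) (Ioi σ) :=
    fun x hx => (laplace_deriv hf (s := x) hx).symm
  have hderiv := (hasDerivAt_laplace (s := q) hf' hq).comp_ofReal
  rw [eulerOp, hlaplace.deriv isOpen_Ioi hq, hderiv.deriv, mul_neg]
  rfl

theorem eqOn_eulerAffine_laplaceCarson (c a : ℂ) (hf : LaplaceRegular σ 1 f)
    (hF : EqOn F (laplaceCarson f) (Ioi σ)) :
    EqOn (eulerAffine c a F) (laplaceCarson (eulerAffine (-c) a f)) (Ioi σ) := by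
  refine (eqOn_eulerAffine c a isOpen_Ioi hF).trans fun q hq => ?_
  have hθ : LaplaceRegular σ 0 (eulerOp f) := (LaplaceRegular.succ_iff.mp hf).2.id_smul
  have hlin := laplaceCarson_mul_add_mul (-c) (-a) hθ.laplaceIntegrable_self
    hf.laplaceIntegrable_self hq
  simp only [neg_mul a, ← sub_eq_add_neg] at hlin
  rw [eulerAffine, eulerOp_laplaceCarson hf hq]
  exact (hlin.trans (by ring)).symm

end LaplaceCarson

theorem differentiableOn_iterate_deriv {𝕜 E : Type*} [NontriviallyNormedField 𝕜]
    [NormedAddCommGroup E] [NormedSpace 𝕜 E] {n : WithTop ℕ∞} {f : 𝕜 → E} {U : Set 𝕜}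
    (hU : IsOpen U) (hf : ContDiffOn 𝕜 n f U) {j : ℕ} (hj : (j : WithTop ℕ∞) < n) :
    DifferentiableOn 𝕜 (deriv^[j] f) U := by
  rw [← iteratedDeriv_eq_iterate]
  exact (hf.differentiableOn_iteratedDerivWithin hj hU.uniqueDiffOn).congr
    (iteratedDerivWithin_of_isOpen hU).symm

theorem LaplaceRegular.of_norm_le_rpow {E : Type*} [NormedAddCommGroup E] [NormedSpace ℂ E]
    [CompleteSpace E] {n : ℕ} {f : ℝ → E} {C p : ℝ} (hf : ContDiffOn ℝ n f (Ioi 0))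
    (hzero : ∀ j < n, Tendsto (deriv^[j] f) (𝓝[>] 0) (𝓝 0))
    (hbound : ∀ τ : ℝ, 0 < τ → ∀ j ≤ n, ‖deriv^[j] f τ‖ ≤ C * (1 + τ) ^ p) :
    LaplaceRegular 0 n f := by
  refine ⟨fun j hj => differentiableOn_iterate_deriv isOpen_Ioi hf (by exact_mod_cast hj), hzero,
    fun j hj => LaplaceIntegrable.of_norm_le_rpow ?_ fun τ hτ => hbound τ hτ j hj⟩
  cases j with
  | zero => exact hf.continuousOn.aestronglyMeasurable measurableSet_Ioi
  | succ j =>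
    rw [Function.iterate_succ_apply']
    exact aestronglyMeasurable_deriv _ _

section PicardFuchs

variable {σ : ℝ} {lam : ℂ} {g F : ℝ → ℂ}

theorem regularized_picardFuchs_factored (hg : ∀ j < 3, DifferentiableOn ℝ (deriv^[j] g) (Ioi 0))
    (hode : ∀ τ : ℝ, 0 < τ →
      ((τ : ℂ) ^ 3 + 4 * (τ : ℂ) ^ 2) * deriv^[3] g τ
        + (3 * (τ : ℂ) ^ 2 + (10 - 8 * lam) * (τ : ℂ)) * deriv^[2] g τ
        + ((τ : ℂ) + (2 - 2 * lam) * (1 - 2 * lam)) * deriv g τ = 0) {τ : ℝ} (hτ : 0 < τ) :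
    eulerAffine (-1) 0 (eulerAffine (-1) 0 (eulerAffine (-1) 0 g)) τ
      = deriv (eulerAffine 2 (2 * lam) (eulerAffine 2 (2 * lam + 1) g)) τ := by
  rw [eulerAffine, eulerOp, deriv_eulerAffine_eulerAffine _ _ _ isOpen_Ioi hg hτ,
    deriv_eulerAffine_eulerAffine _ _ _ isOpen_Ioi hg hτ]
  linear_combination -hode τ hτ

theorem picardFuchs_of_regularized (hg : LaplaceRegular σ 3 g)
    (hode : EqOn (eulerAffine (-1) 0 (eulerAffine (-1) 0 (eulerAffine (-1) 0 g)))
      (deriv (eulerAffine 2 (2 * lam) (eulerAffine 2 (2 * lam + 1) g))) (Ioi 0))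
    (hF : EqOn F (laplaceCarson g) (Ioi σ)) {q : ℝ} (hq : σ < q) :
    eulerOp (eulerOp (eulerOp F)) q
      = q * eulerAffine (-2) (2 * lam) (eulerAffine (-2) (2 * lam + 1) F) q := by
  have hθg := hg.eulerAffine (-1) 0
  have hPg := hg.eulerAffine 2 (2 * lam + 1)
  have hcube : eulerOp (eulerOp (eulerOp F)) q
      = laplaceCarson (eulerAffine (-1) 0 (eulerAffine (-1) 0 (eulerAffine (-1) 0 g))) q := by
    simp only [eulerOp_eq_eulerAffine]
    exact eqOn_eulerAffine_laplaceCarson 1 0 (hθg.eulerAffine (-1) 0)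
      (eqOn_eulerAffine_laplaceCarson 1 0 (hθg.mono one_le_two)
        (eqOn_eulerAffine_laplaceCarson 1 0 (hg.mono (by norm_num)) hF)) hq
  have hquad : eulerAffine (-2) (2 * lam) (eulerAffine (-2) (2 * lam + 1) F) q
      = laplaceCarson (eulerAffine 2 (2 * lam) (eulerAffine 2 (2 * lam + 1) g)) q := by
    simpa only [neg_neg] using eqOn_eulerAffine_laplaceCarson (-2) (2 * lam)
      (by simpa only [neg_neg] using hPg.mono one_le_two)
      (eqOn_eulerAffine_laplaceCarson (-2) (2 * lam + 1) (hg.mono (by norm_num)) hF) hq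
  rw [hcube, hquad, ← laplaceCarson_deriv (hPg.eulerAffine 2 (2 * lam)) hq]
  exact congrArg _ (laplace_congr hode q)

end PicardFuchs

theorem stmt_6_general (σ : ℝ) (lam : ℂ) (g : ℝ → ℂ) (hg : LaplaceRegular σ 3 g)
    (hode : ∀ τ : ℝ, 0 < τ →
      ((τ : ℂ) ^ 3 + 4 * (τ : ℂ) ^ 2) * deriv^[3] g τ
        + (3 * (τ : ℂ) ^ 2 + (10 - 8 * lam) * (τ : ℂ)) * deriv^[2] g τ
        + ((τ : ℂ) + (2 - 2 * lam) * (1 - 2 * lam)) * deriv g τ = 0)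
    (F : ℝ → ℂ)
    (hF : ∀ q : ℝ, σ < q →
      F q = (q : ℂ) * ∫ τ in Ioi (0 : ℝ), Complex.exp (-(q : ℂ) * (τ : ℂ)) * g τ) :
    (∀ q : ℝ, σ < q →
      IntegrableOn (fun τ : ℝ => Complex.exp (-(q : ℂ) * (τ : ℂ)) * g τ) (Ioi 0)) ∧
    ContDiffOn ℝ (⊤ : ℕ∞) F (Ioi σ) ∧
    ∀ q : ℝ, σ < q →
      eulerOp (eulerOp (eulerOp F)) q
        - (q : ℂ) * (-2 * eulerOp (fun s => -2 * eulerOp F s - (2 * lam + 1) * F s) q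
            - 2 * lam * (-2 * eulerOp F q - (2 * lam + 1) * F q)) = 0 := by
  refine ⟨fun q hq => hg.laplaceIntegrable_self q hq,
    (contDiffOn_laplaceCarson hg.laplaceIntegrable_self).congr hF, fun q hq => ?_⟩
  exact sub_eq_zero.mpr (picardFuchs_of_regularized hg
    (fun τ hτ => regularized_picardFuchs_factored hg.differentiableOn hode hτ) hF hq)

/-- Step 3 of the paper's example.  Let `λ ≥ 3` be real and let
`g : (0,∞) → ℂ` be `C³`, satisfying the expanded regularized Picard–Fuchs equation
`(τ³+4τ²)g‴ + (3τ²+(10−8λ)τ)g″ + (τ+(2−2λ)(1−2λ))g′ = 0` on `(0,∞)`, with `g, g′, g″, g‴ → 0`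
as `τ → 0⁺` and all of polynomial growth.  Then `F(q) = q·∫₀^∞ e^{−qτ} g(τ) dτ` is well
defined and smooth on `(0,∞)` and satisfies the Picard–Fuchs equation of `Tot(O_{ℙ²}(−2))`
at `z = 1`: `[θ_q³ − q·(−2θ_q−2λ)(−2θ_q−2λ−1)] F = 0` on `(0,∞)`. -/
theorem stmt_6 (lam : ℝ) (hlam : 3 ≤ lam)
    (g : ℝ → ℂ)
    (hg_smooth : ContDiffOn ℝ 3 g (Set.Ioi 0))
    (hode : ∀ τ : ℝ, 0 < τ →
      ((τ : ℂ) ^ 3 + 4 * (τ : ℂ) ^ 2) * deriv^[3] g τ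
        + (3 * (τ : ℂ) ^ 2 + (10 - 8 * (lam : ℂ)) * (τ : ℂ)) * deriv^[2] g τ
        + ((τ : ℂ) + (2 - 2 * (lam : ℂ)) * (1 - 2 * (lam : ℂ))) * deriv g τ = 0)
    (hg0 : ∀ j ≤ 3, Filter.Tendsto (deriv^[j] g) (nhdsWithin 0 (Set.Ioi 0)) (nhds 0))
    (hpoly : ∃ C p : ℝ, ∀ τ : ℝ, 0 < τ → ∀ j ≤ 3, ‖deriv^[j] g τ‖ ≤ C * (1 + τ) ^ p)
    (F : ℝ → ℂ)
    (hF : ∀ q : ℝ, 0 < q →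
      F q = (q : ℂ) * ∫ τ in Set.Ioi (0 : ℝ), Complex.exp (-(q : ℂ) * (τ : ℂ)) * g τ) :
    (∀ q : ℝ, 0 < q →
      IntegrableOn (fun τ : ℝ => Complex.exp (-(q : ℂ) * (τ : ℂ)) * g τ) (Set.Ioi 0)) ∧
    ContDiffOn ℝ (⊤ : ℕ∞) F (Set.Ioi 0) ∧
    ∀ q : ℝ, 0 < q →
      eulerOp (eulerOp (eulerOp F)) q
        - (q : ℂ) * (-2 * eulerOp (fun s => -2 * eulerOp F s - (2 * (lam : ℂ) + 1) * F s) q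
            - 2 * (lam : ℂ) * (-2 * eulerOp F q - (2 * (lam : ℂ) + 1) * F q)) = 0 := by
  obtain ⟨C, p, hbound⟩ := hpoly
  exact stmt_6_general 0 lam g (LaplaceRegular.of_norm_le_rpow hg_smooth
    (fun j hj => hg0 j hj.le) hbound) hode F hF
end

section
/- Fix λ ∈ C. In the algebra A, for every integer n ≥ 1 and 1 ≤ l ≤ n the element H + l is a unit; set u_n = [∏_{l=0}^{2n−1}(−2(H+λ)−l)]·[∏_{l=1}^{n}(H+l)³]^{−1} ∈ A and u₀ = 1. Then: (i) the A-valued power series Σ_{n≥0} u_n qⁿ converges for every complex q; (ii) the A-valued function I(q) := exp(H·log q)·Σ_{n≥0} u_n qⁿ, defined for real q > 0, is infinitely differentiable and satisfies the Picard–Fuchs equation θ_q³ I(q) = q·(−2θ_q − 2λ)(−2θ_q − 2λ − 1) I(q) for all q > 0, where θ_q is the Euler operator θ_q I(q) = q·I′(q) acting on A-valued functions. -/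
/-- The Euler operator `θ f (q) = q · f′(q)` acting on functions of a real variable with
values in a normed space. -/
noncomputable def eulerOpA {A : Type*} [NormedAddCommGroup A] [NormedSpace ℝ A]
    (f : ℝ → A) : ℝ → A := fun q => q • deriv f q

/-!
The substitution `v n ↦ (H + n) * v n` on coefficients turns a Frobenius series
`exp (log q • H) * ∑ qⁿ • v n` into its image under `θ`. Hence `θ³ I` and
`(-2θ - 2λ)(-2θ - 2λ - 1) I` are Frobenius series, with coefficients `(H + n)³ * u n` and
`(a - 2n) * (a - (2n + 1)) * u n` where `a = -2 * (H + λ)`. The recurrence for `u` says that the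
former sequence is the latter delayed by one step, and the delay is multiplication by `q`; the
boundary term `H³ * u 0` of the delay is killed by `H³ = 0`.
The recurrence also gives convergence: the resolvent bound `(H + n)⁻¹ = O(1 / n)` makes the ratio
of consecutive coefficients `O(1 / n)`.
-/

open Asymptotics Bornology Filter Set
open scoped Topology

section EntireSeries

variable {E : Type*} [NormedAddCommGroup E] [NormedSpace ℂ E]

variable (E) in
/-- The coefficient sequences of the `E`-valued power series with infinite radius of convergence,
expressed through absolute convergence on every disc. -/
def entireCoeff : Submodule ℂ (ℕ → E) where
  carrier := {v | ∀ r : ℝ, 0 ≤ r → Summable fun n => ‖v n‖ * r ^ n}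
  zero_mem' r _ := by simp
  add_mem' {v w} hv hw r hr := by
    refine .of_nonneg_of_le (fun n => by positivity) (fun n => ?_) ((hv r hr).add (hw r hr))
    rw [← add_mul]
    gcongr
    exact norm_add_le _ _
  smul_mem' c v hv r hr := by
    simpa only [Pi.smul_apply, norm_smul, mul_assoc] using (hv r hr).mul_left ‖c‖

/-- The sum `∑ zⁿ • v n` of the power series with coefficients `v`. -/
noncomputable def entireSum (v : ℕ → E) (z : ℂ) : E := ∑' n, z ^ n • v n

variable {v w : ℕ → E}

lemma natCast_smul_mem_entireCoeff (hv : v ∈ entireCoeff E) :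
    (fun n : ℕ => (n : ℂ) • v n) ∈ entireCoeff E := by
  intro r hr
  refine .of_nonneg_of_le (fun n => by positivity) (fun n => ?_) (hv (2 * r) (by positivity))
  have hn : (n : ℝ) ≤ 2 ^ n := mod_cast Nat.lt_two_pow_self.le
  calc ‖(n : ℂ) • v n‖ * r ^ n = n * (‖v n‖ * r ^ n) := by
        rw [norm_smul, Complex.norm_natCast, mul_assoc]
    _ ≤ 2 ^ n * (‖v n‖ * r ^ n) := by gcongr
    _ = ‖v n‖ * (2 * r) ^ n := by ring

lemma mem_entireCoeff_of_tendsto_ratio {c : ℕ → ℝ} (hc : Tendsto c atTop (𝓝 0))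
    (h : ∀ n, ‖v (n + 1)‖ ≤ c n * ‖v n‖) : v ∈ entireCoeff E := by
  intro r hr
  have hcr : Tendsto (fun n => c n * r) atTop (𝓝 0) := by simpa using hc.mul_const r
  refine summable_of_ratio_norm_eventually_le one_half_lt_one ?_
  filter_upwards [hcr.eventually_le_const one_half_pos] with n hn
  rw [Real.norm_of_nonneg (by positivity), Real.norm_of_nonneg (by positivity)]
  calc ‖v (n + 1)‖ * r ^ (n + 1) ≤ c n * ‖v n‖ * r ^ (n + 1) := by gcongr; exact h n
    _ = c n * r * (‖v n‖ * r ^ n) := by ring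
    _ ≤ 1 / 2 * (‖v n‖ * r ^ n) := by gcongr

lemma entireSum_smul (c : ℂ) (v : ℕ → E) (z : ℂ) :
    entireSum (c • v) z = c • entireSum v z := by
  simp only [entireSum, Pi.smul_apply, smul_comm _ c, tsum_const_smul'']

lemma norm_pow_smul_le_of_mem_ball {r : ℝ} {z : ℂ} (hz : z ∈ Metric.ball 0 r) (v : ℕ → E)
    (n : ℕ) : ‖z ^ n • v n‖ ≤ ‖v n‖ * r ^ n := by
  rw [norm_smul, norm_pow, mul_comm]
  gcongr
  exact (mem_ball_zero_iff.mp hz).le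

variable [CompleteSpace E]

lemma summable_pow_smul (hv : v ∈ entireCoeff E) (z : ℂ) : Summable fun n => z ^ n • v n :=
  .of_norm <| by simpa only [norm_smul, norm_pow, mul_comm] using hv ‖z‖ (norm_nonneg z)

lemma entireSum_add (hv : v ∈ entireCoeff E) (hw : w ∈ entireCoeff E) (z : ℂ) :
    entireSum (v + w) z = entireSum v z + entireSum w z := by
  simp only [entireSum, Pi.add_apply, smul_add]
  exact (summable_pow_smul hv z).tsum_add (summable_pow_smul hw z)

lemma entireSum_sub (hv : v ∈ entireCoeff E) (hw : w ∈ entireCoeff E) (z : ℂ) :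
    entireSum (v - w) z = entireSum v z - entireSum w z := by
  simp only [entireSum, Pi.sub_apply, smul_sub]
  exact (summable_pow_smul hv z).tsum_sub (summable_pow_smul hw z)

lemma entireSum_eq_zero_add (hv : v ∈ entireCoeff E) (z : ℂ) :
    entireSum v z = v 0 + z • entireSum (fun n => v (n + 1)) z := by
  simp only [entireSum, ← tsum_const_smul'', smul_smul, ← pow_succ']
  simpa using (summable_pow_smul hv z).tsum_eq_zero_add

lemma hasSum_deriv_entireSum (hv : v ∈ entireCoeff E) (z : ℂ) :
    HasSum (fun n : ℕ => (n * z ^ (n - 1)) • v n) (deriv (entireSum v) z) := by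
  have hderiv (n : ℕ) : deriv (fun w : ℂ => w ^ n • v n) z = (n * z ^ (n - 1)) • v n :=
    ((hasDerivAt_pow n z).smul_const (v n)).deriv
  simp only [← hderiv]
  exact Complex.hasSum_deriv_of_summable_norm (hv (‖z‖ + 1) (by positivity))
    (fun n => by fun_prop) Metric.isOpen_ball
    (fun n w hw => norm_pow_smul_le_of_mem_ball hw v n) (by simp)

lemma smul_deriv_entireSum (hv : v ∈ entireCoeff E) (z : ℂ) :
    z • deriv (entireSum v) z = entireSum (fun n : ℕ => (n : ℂ) • v n) z := by
  rw [← ((hasSum_deriv_entireSum hv z).const_smul z).tsum_eq, entireSum]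
  congr! 2 with n
  rcases n with _ | n
  · simp
  · simp only [smul_smul, Nat.add_sub_cancel]
    ring_nf

lemma differentiable_entireSum (hv : v ∈ entireCoeff E) : Differentiable ℂ (entireSum v) := by
  intro z
  have hball : DifferentiableOn ℂ (entireSum v) (Metric.ball 0 (‖z‖ + 1)) :=
    Complex.differentiableOn_tsum_of_summable_norm (hv (‖z‖ + 1) (by positivity))
      (fun n => by fun_prop) Metric.isOpen_ball
      (fun n w hw => norm_pow_smul_le_of_mem_ball hw v n)
  exact hball.differentiableAt (Metric.isOpen_ball.mem_nhds (by simp))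

end EntireSeries

/-- The action of the Euler operator on the coefficients of a Frobenius series with exponent
`H`. -/
def eulerCoeff {A : Type*} [Semiring A] (H : A) (v : ℕ → A) (n : ℕ) : A := (H + n) * v n

lemma eulerCoeff_eq_mul_add_smul (R : Type*) {A : Type*} [CommSemiring R] [Semiring A] [Algebra R A]
    (H : A) (v : ℕ → A) :
    eulerCoeff H v = (fun n => H * v n) + fun n : ℕ => (n : R) • v n := by
  funext n
  simp only [eulerCoeff, Pi.add_apply, add_mul, Algebra.smul_def, map_natCast]

lemma picardFuchs_rhs_eulerCoeff {R A : Type*} [CommRing R] [CommRing A] [Algebra R A] (H : A)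
    (lam : R) (v : ℕ → A) :
    (-2 : R) • eulerCoeff H ((-2 : R) • eulerCoeff H v - (2 * lam + 1) • v) -
        (2 * lam) • ((-2 : R) • eulerCoeff H v - (2 * lam + 1) • v) =
      fun n => (-2 * (H + algebraMap R A lam) - ((2 * n : ℕ) : A)) *
        (-2 * (H + algebraMap R A lam) - ((2 * n + 1 : ℕ) : A)) * v n := by
  funext n
  simp only [eulerCoeff, Pi.sub_apply, Pi.smul_apply]
  simp only [Algebra.smul_def, map_add, map_mul, map_neg, map_one, map_ofNat]
  push_cast
  ring

/-- The Frobenius series `q ^ H * ∑ qⁿ • v n` with exponent `H` and coefficients `v`, where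
`q ^ H = exp (log q • H)`; it is meant for `q > 0`, `Real.log` being `log |q|` elsewhere. -/
noncomputable def frobeniusSeries {A : Type*} [NormedRing A] [NormedAlgebra ℂ A] (H : A)
    (v : ℕ → A) (q : ℝ) : A :=
  NormedSpace.exp ((Real.log q : ℂ) • H) * entireSum v q

section FrobeniusSeries

variable {A : Type*} [NormedRing A] [NormedAlgebra ℂ A] {H : A} {v : ℕ → A}

lemma mul_mem_entireCoeff (a : A) (hv : v ∈ entireCoeff A) :
    (fun n => a * v n) ∈ entireCoeff A := by
  intro r hr
  refine .of_nonneg_of_le (fun n => by positivity) (fun n => ?_) ((hv r hr).mul_left ‖a‖)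
  rw [← mul_assoc]
  gcongr
  exact norm_mul_le _ _

lemma eulerCoeff_mem_entireCoeff (H : A) (hv : v ∈ entireCoeff A) :
    eulerCoeff H v ∈ entireCoeff A := by
  rw [eulerCoeff_eq_mul_add_smul ℂ]
  exact add_mem (mul_mem_entireCoeff H hv) (natCast_smul_mem_entireCoeff hv)

variable [CompleteSpace A]

lemma entireSum_eulerCoeff (H : A) (hv : v ∈ entireCoeff A) (z : ℂ) :
    entireSum (eulerCoeff H v) z = H * entireSum v z + z • deriv (entireSum v) z := by
  rw [eulerCoeff_eq_mul_add_smul ℂ, entireSum_add (mul_mem_entireCoeff H hv)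
    (natCast_smul_mem_entireCoeff hv), smul_deriv_entireSum hv]
  simp only [entireSum, ← mul_smul_comm, (summable_pow_smul hv z).tsum_mul_left]

lemma frobeniusSeries_eq_zero_add (H : A) (hv : v ∈ entireCoeff A) (q : ℝ) :
    frobeniusSeries H v q = NormedSpace.exp ((Real.log q : ℂ) • H) * v 0 +
      q • frobeniusSeries H (fun n => v (n + 1)) q := by
  simp only [frobeniusSeries, entireSum_eq_zero_add hv, mul_add, mul_smul_comm, Complex.coe_smul]

lemma contDiffOn_frobeniusSeries (H : A) (hv : v ∈ entireCoeff A) {n : WithTop ℕ∞} :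
    ContDiffOn ℝ n (frobeniusSeries H v) (Ioi 0) := by
  have hexp : ContDiff ℝ n fun z : ℂ => NormedSpace.exp (z • H) :=
    (Differentiable.contDiff fun z : ℂ =>
      (hasDerivAt_exp_smul_const H z).differentiableAt).restrict_scalars ℝ
  have hsum : ContDiff ℝ n (entireSum v) :=
    (differentiable_entireSum hv).contDiff.restrict_scalars ℝ
  have hlog : ContDiffOn ℝ n Real.log (Ioi 0) :=
    Real.contDiffOn_log.mono fun q hq => ne_of_gt hq
  have hofReal : ContDiff ℝ n ((↑) : ℝ → ℂ) := Complex.ofRealCLM.contDiff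
  exact ((hexp.comp hofReal).comp_contDiffOn hlog).mul (hsum.comp hofReal).contDiffOn

lemma hasDerivAt_frobeniusSeries (H : A) (hv : v ∈ entireCoeff A) {q : ℝ} (hq : q ≠ 0) :
    HasDerivAt (frobeniusSeries H v) (q⁻¹ • frobeniusSeries H (eulerCoeff H v) q) q := by
  have hexp : HasDerivAt (fun s : ℝ => NormedSpace.exp ((Real.log s : ℂ) • H))
      (((q⁻¹ : ℝ) : ℂ) • (NormedSpace.exp ((Real.log q : ℂ) • H) * H)) q :=
    HasDerivAt.scomp (h := fun s : ℝ => (Real.log s : ℂ)) q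
      (hasDerivAt_exp_smul_const (𝕂 := ℂ) H (Real.log q : ℂ))
      (Real.hasDerivAt_log hq).ofReal_comp
  have hsum : HasDerivAt (fun s : ℝ => entireSum v s) (deriv (entireSum v) q) q := by
    simpa using! (differentiable_entireSum hv q).hasDerivAt.scomp q Complex.ofRealCLM.hasDerivAt
  refine (hexp.mul hsum).congr_deriv ?_
  simp only [frobeniusSeries, entireSum_eulerCoeff H hv, mul_add, smul_add, Complex.coe_smul,
    mul_smul_comm, inv_smul_smul₀ hq, smul_mul_assoc, mul_assoc]

lemma eulerOpA_eqOn_frobeniusSeries (hv : v ∈ entireCoeff A) {f : ℝ → A}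
    (hf : EqOn f (frobeniusSeries H v) (Ioi 0)) :
    EqOn (eulerOpA f) (frobeniusSeries H (eulerCoeff H v)) (Ioi 0) := by
  intro q hq
  have hq0 : q ≠ 0 := ne_of_gt hq
  rw [eulerOpA, (hf.eventuallyEq_of_mem (Ioi_mem_nhds hq)).deriv_eq,
    (hasDerivAt_frobeniusSeries H hv hq0).deriv, smul_inv_smul₀ hq0]

lemma smul_eulerOpA_sub_smul_eqOn_frobeniusSeries (hv : v ∈ entireCoeff A) {f : ℝ → A}
    (hf : EqOn f (frobeniusSeries H v) (Ioi 0)) (b c : ℂ) :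
    EqOn (fun q => b • eulerOpA f q - c • f q)
      (frobeniusSeries H (b • eulerCoeff H v - c • v)) (Ioi 0) := by
  intro q hq
  have hθv := eulerCoeff_mem_entireCoeff H hv
  simp only [eulerOpA_eqOn_frobeniusSeries hv hf hq, hf hq, frobeniusSeries,
    entireSum_sub (Submodule.smul_mem _ b hθv) (Submodule.smul_mem _ c hv), entireSum_smul,
    mul_sub, mul_smul_comm]

lemma frobeniusSeries_eulerCoeff_three (hH : H ^ 3 = 0) (hv : v ∈ entireCoeff A) (q : ℝ) :
    frobeniusSeries H (eulerCoeff H (eulerCoeff H (eulerCoeff H v))) q =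
      q • frobeniusSeries H (fun n => (H + ((n + 1 : ℕ) : A)) ^ 3 * v (n + 1)) q := by
  have hcoeff (n : ℕ) :
      eulerCoeff H (eulerCoeff H (eulerCoeff H v)) n = (H + (n : A)) ^ 3 * v n := by
    simp only [eulerCoeff, pow_three, mul_assoc]
  have hθ {w : ℕ → A} : w ∈ entireCoeff A → eulerCoeff H w ∈ entireCoeff A :=
    eulerCoeff_mem_entireCoeff H
  rw [frobeniusSeries_eq_zero_add H (hθ (hθ (hθ hv)))]
  simp only [hcoeff, Nat.cast_zero, add_zero, hH, zero_mul, mul_zero, zero_add]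

end FrobeniusSeries

/-- The coefficients `[∏_{l<2n} (a - l)] · [∏_{1≤l≤n} (H + l)³]⁻¹` of the I-function of
`Tot(O_{P²}(-2))` at `z = 1`, where `a` stands for `-2(H + λ)`. -/
noncomputable def iFunctionCoeff {A : Type*} [CommRing A] (H a : A) (n : ℕ) : A :=
  (∏ l ∈ Finset.range (2 * n), (a - (l : A))) *
    Ring.inverse (∏ l ∈ Finset.range n, (H + ((l : A) + 1)) ^ 3)

lemma iFunctionCoeff_succ {A : Type*} [CommRing A] (H a : A) (n : ℕ) :
    iFunctionCoeff H a (n + 1) = Ring.inverse (H + ((n + 1 : ℕ) : A)) ^ 3 *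
      ((a - ((2 * n : ℕ) : A)) * (a - ((2 * n + 1 : ℕ) : A))) * iFunctionCoeff H a n := by
  simp only [iFunctionCoeff, Nat.mul_succ, Finset.prod_range_succ, Ring.mul_inverse_rev,
    Ring.inverse_pow, Nat.cast_succ]
  ring

lemma pow_three_mul_iFunctionCoeff_succ {A : Type*} [CommRing A] {H : A} (a : A) {n : ℕ}
    (hunit : IsUnit (H + ((n + 1 : ℕ) : A))) :
    (H + ((n + 1 : ℕ) : A)) ^ 3 * iFunctionCoeff H a (n + 1) =
      (a - ((2 * n : ℕ) : A)) * (a - ((2 * n + 1 : ℕ) : A)) * iFunctionCoeff H a n := by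
  rw [iFunctionCoeff_succ, mul_assoc, ← mul_assoc, ← mul_pow, Ring.mul_inverse_cancel _ hunit,
    one_pow, one_mul]

lemma isUnit_add_natCast_of_isNilpotent (K : Type*) [Field K] [CharZero K] {A : Type*} [Ring A]
    [Algebra K A] {x : A} (hx : IsNilpotent x) {n : ℕ} (hn : n ≠ 0) : IsUnit (x + (n : A)) := by
  have hunit : IsUnit (n : A) := by
    simpa using (IsUnit.mk0 (n : K) (mod_cast hn)).map (algebraMap K A)
  exact hx.isUnit_add_right_of_commute hunit (Nat.cast_commute n x).symm

lemma inverse_add_natCast_succ_isBigO {A : Type*} [NormedRing A] [NormedAlgebra ℂ A]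
    [CompleteSpace A] (H : A) :
    (fun n : ℕ => Ring.inverse (H + ((n + 1 : ℕ) : A))) =O[atTop]
      fun n : ℕ => ((n : ℝ) + 1)⁻¹ := by
  have hcast : Tendsto (fun n : ℕ => ((n + 1 : ℕ) : ℂ)) atTop (cobounded ℂ) :=
    tendsto_natCast_atTop_cobounded.comp (tendsto_add_atTop_nat 1)
  have hresolvent (n : ℕ) :
      resolvent (-H) ((n + 1 : ℕ) : ℂ) = Ring.inverse (H + ((n + 1 : ℕ) : A)) := by
    rw [resolvent, sub_neg_eq_add, map_natCast, add_comm]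
  have hnorm (n : ℕ) : ‖(((n + 1 : ℕ) : ℂ))⁻¹‖ = ‖((n : ℝ) + 1)⁻¹‖ := by
    rw [norm_inv, norm_inv, Complex.norm_natCast, Nat.cast_succ,
      Real.norm_of_nonneg (by positivity)]
  exact (((spectrum.resolvent_isBigO_inv (𝕜 := ℂ) (-H)).comp_tendsto hcast).congr_left
    hresolvent).trans (isBigO_of_le _ fun n => (hnorm n).le)

lemma sub_natCast_isBigO {R : Type*} [NormedRing R] (a : R) {k : ℕ → ℕ} {C : ℝ}
    (hk : ∀ n, (k n : ℝ) ≤ C * (n + 1)) :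
    (fun n => a - (k n : R)) =O[atTop] fun n : ℕ => (n : ℝ) + 1 := by
  refine .of_bound (‖a‖ + C * ‖(1 : R)‖) (.of_forall fun n => ?_)
  rw [Real.norm_of_nonneg (by positivity)]
  have ha : ‖a‖ ≤ ‖a‖ * (n + 1) := le_mul_of_one_le_right (norm_nonneg a) (by simp)
  have hkn : ‖(k n : R)‖ ≤ C * (n + 1) * ‖(1 : R)‖ :=
    (Nat.norm_cast_le (k n)).trans (by gcongr; exact hk n)
  linarith [norm_sub_le a (k n : R)]

section BanachAlgebra

variable {A : Type*} [NormedCommRing A] [NormedAlgebra ℂ A] [CompleteSpace A]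

lemma tendsto_iFunctionCoeff_ratio (H a : A) :
    Tendsto (fun n : ℕ => Ring.inverse (H + ((n + 1 : ℕ) : A)) ^ 3 *
      ((a - ((2 * n : ℕ) : A)) * (a - ((2 * n + 1 : ℕ) : A)))) atTop (𝓝 0) := by
  have hO := ((inverse_add_natCast_succ_isBigO H).pow 3).mul
    ((sub_natCast_isBigO a (k := fun n => 2 * n) (C := 2) fun n => by push_cast; linarith).mul
      (sub_natCast_isBigO a (k := fun n => 2 * n + 1) (C := 2) fun n => by push_cast; linarith))
  refine hO.trans_tendsto (tendsto_one_div_add_atTop_nhds_zero_nat.congr fun n => ?_)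
  field_simp

lemma iFunctionCoeff_mem_entireCoeff (H a : A) : iFunctionCoeff H a ∈ entireCoeff A :=
  mem_entireCoeff_of_tendsto_ratio (tendsto_zero_iff_norm_tendsto_zero.mp
    (tendsto_iFunctionCoeff_ratio H a)) fun n => by
      rw [iFunctionCoeff_succ]
      exact norm_mul_le _ _

end BanachAlgebra

theorem stmt_7_general {A : Type*} [NormedCommRing A] [NormedAlgebra ℂ A] [CompleteSpace A]
    (H : A) (hH : H ^ 3 = 0)
    (lam : ℂ)
    (u : ℕ → A)
    (hu : ∀ n : ℕ, u n =
      (∏ l ∈ Finset.range (2 * n), (-2 * (H + algebraMap ℂ A lam) - (l : A))) *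
        Ring.inverse (∏ l ∈ Finset.range n, (H + ((l : A) + 1)) ^ 3))
    (I : ℝ → A)
    (hI : ∀ q : ℝ, 0 < q →
      I q = NormedSpace.exp (((Real.log q : ℝ) : ℂ) • H) * ∑' n : ℕ, ((q : ℂ) ^ n) • u n) :
    (∀ n l : ℕ, 1 ≤ l → l ≤ n → IsUnit (H + (l : A))) ∧
    (∀ q : ℂ, Summable (fun n : ℕ => (q ^ n) • u n)) ∧
    ContDiffOn ℝ (⊤ : ℕ∞) I (Set.Ioi 0) ∧
    ∀ q : ℝ, 0 < q →
      eulerOpA (eulerOpA (eulerOpA I)) q =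
        q • ((-2 : ℂ) • eulerOpA
              (fun s => (-2 : ℂ) • eulerOpA I s - (2 * lam + 1) • I s) q
          - (2 * lam) • ((-2 : ℂ) • eulerOpA I q - (2 * lam + 1) • I q)) := by
  obtain rfl : u = iFunctionCoeff H (-2 * (H + algebraMap ℂ A lam)) := funext hu
  set u := iFunctionCoeff H (-2 * (H + algebraMap ℂ A lam))
  have hunit {l : ℕ} : l ≠ 0 → IsUnit (H + (l : A)) :=
    isUnit_add_natCast_of_isNilpotent ℂ ⟨3, hH⟩
  have hu_entire : u ∈ entireCoeff A := iFunctionCoeff_mem_entireCoeff H _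
  have hθ {w : ℕ → A} : w ∈ entireCoeff A → eulerCoeff H w ∈ entireCoeff A :=
    eulerCoeff_mem_entireCoeff H
  have hI₀ : EqOn I (frobeniusSeries H u) (Ioi 0) := hI
  refine ⟨fun n l hl _ => hunit (by lia), summable_pow_smul hu_entire,
    (contDiffOn_frobeniusSeries H hu_entire).congr hI₀, fun q hq => ?_⟩
  have hleft := eulerOpA_eqOn_frobeniusSeries (hθ (hθ hu_entire))
    (eulerOpA_eqOn_frobeniusSeries (hθ hu_entire) (eulerOpA_eqOn_frobeniusSeries hu_entire hI₀)) hq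
  have hright := smul_eulerOpA_sub_smul_eqOn_frobeniusSeries
    (sub_mem (Submodule.smul_mem _ (-2) (hθ hu_entire))
      (Submodule.smul_mem _ (2 * lam + 1) hu_entire))
    (smul_eulerOpA_sub_smul_eqOn_frobeniusSeries hu_entire hI₀ (-2) (2 * lam + 1))
    (-2) (2 * lam) hq
  beta_reduce at hright
  rw [hleft, hright, frobeniusSeries_eulerCoeff_three hH hu_entire, picardFuchs_rhs_eulerCoeff]
  congr! 3 with n
  exact pow_three_mul_iFunctionCoeff_succ _ (hunit n.succ_ne_zero)

/-- Let `A = ℂ[X]/(X³)` (formalized as a complete normed commutative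
`ℂ`-algebra with an element `H` satisfying `H³ = 0` and `1, H, H²` linearly independent).
Then: every `H + l` (`1 ≤ l ≤ n`) is a unit; with
`u_n = [∏_{l=0}^{2n−1}(−2(H+λ)−l)]·[∏_{l=1}^{n}(H+l)³]⁻¹` the series `Σ u_n qⁿ` converges for
every complex `q`; and `I(q) = exp(H·log q)·Σ_{n≥0} u_n qⁿ` is smooth on `(0,∞)` and satisfies
the Picard–Fuchs equation `θ_q³ I = q·(−2θ_q−2λ)(−2θ_q−2λ−1) I` there. -/
theorem stmt_7 {A : Type*} [NormedCommRing A] [NormedAlgebra ℂ A] [CompleteSpace A]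
    (H : A) (hH : H ^ 3 = 0) (hbasis : LinearIndependent ℂ ![1, H, H ^ 2])
    (lam : ℂ)
    (u : ℕ → A)
    (hu : ∀ n : ℕ, u n =
      (∏ l ∈ Finset.range (2 * n), (-2 * (H + algebraMap ℂ A lam) - (l : A))) *
        Ring.inverse (∏ l ∈ Finset.range n, (H + ((l : A) + 1)) ^ 3))
    (I : ℝ → A)
    (hI : ∀ q : ℝ, 0 < q →
      I q = NormedSpace.exp (((Real.log q : ℝ) : ℂ) • H) * ∑' n : ℕ, ((q : ℂ) ^ n) • u n) :
    (∀ n l : ℕ, 1 ≤ l → l ≤ n → IsUnit (H + (l : A))) ∧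
    (∀ q : ℂ, Summable (fun n : ℕ => (q ^ n) • u n)) ∧
    ContDiffOn ℝ (⊤ : ℕ∞) I (Set.Ioi 0) ∧
    ∀ q : ℝ, 0 < q →
      eulerOpA (eulerOpA (eulerOpA I)) q =
        q • ((-2 : ℂ) • eulerOpA
              (fun s => (-2 : ℂ) • eulerOpA I s - (2 * lam + 1) • I s) q
          - (2 * lam) • ((-2 : ℂ) • eulerOpA I q - (2 * lam + 1) • I q)) :=
  stmt_7_general H hH lam u hu I hI
end
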